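/- arXiv:0705.1171 — 2 statements merged into one kernel-verified Lean document; each statement's English description precedes it below -/
import Mathlib

section
/- Let n ≥ 1 and (α₁, …, αₙ), (β₁, …, βₙ) ∈ ℂⁿ. There exists a bijective holomorphic map ψ : 𝔻 → 𝔻 such that A(β₁, …, βₙ) = { f ∘ ψ : f ∈ A(α₁, …, αₙ) } if and only if there exists τ ∈ ℂ with |τ| = 1 such that β_j = τ^{2j−1} α_j for all 1 ≤ j ≤ n. -/
/-!
Let `ψ` be a bijective holomorphic self-map of the disk carrying `A(α)` to `A(β)`. The functions
`z^{2n+2}` and `z^{2n+3}` lie in `A(β)`, so both are of the form `f ∘ ψ` with `f` holomorphic, and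
the quotient of the two `f`'s is a holomorphic inverse of `ψ` after a singularity is removed
(`exists_holo_inverse`). In particular `ψ'(0) ≠ 0`. Since `z^{2n+2} ∈ A(α)`, the function
`ψ^{2n+2}` is in `A(β)`, all of whose members have zero derivative at the origin, and so `ψ(0) = 0`
(`map_zero_eq_zero`). The Schwarz lemma, applied to `ψ` and to its inverse, then forces
`ψ(z) = τ z` with `|τ| = 1` (`eq_rotation`).

It remains to compare `π_α(τ z)` with `p(π_β(z))` modulo `z^{2n+2}` (`coeff_relation`). The
difference `π_α(τ z) - τ² π_β(z)` is an odd polynomial, while for `q ≠ 0` the polynomial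
`q ∘ π_β` starts in the even degree `2k`, where `k ≤ deg q` is the order of `q` at the origin
(`exists_even_coeff_ne_zero`). Hence `p = τ² X`, and comparing the odd coefficients gives
`τ^{2j+1} α_j = τ² β_j`. Conversely, if this relation holds then `π_α(τ z) = τ² π_β(z)`, and the
rotation by `τ` carries `A(α)` to `A(β)` (`comp_diskRot_mem`).
-/

open scoped Classical

noncomputable section

/-- The open unit disk in `ℂ`. -/
def 𝔻 : Set ℂ := Metric.ball 0 1

lemma zero_mem_disk : (0 : ℂ) ∈ 𝔻 := Metric.mem_ball_self one_pos

/-- The origin, as a point of the disk. -/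
def d0 : 𝔻 := ⟨0, zero_mem_disk⟩

/-- A function on the disk is holomorphic if it agrees on `𝔻` with a function
that is (complex) differentiable on `𝔻`. -/
def IsHolo (f : 𝔻 → ℂ) : Prop :=
  ∃ F : ℂ → ℂ, DifferentiableOn ℂ F 𝔻 ∧ ∀ z : 𝔻, f z = F z

/-- `O(𝔻)`: the algebra of all holomorphic functions on the disk. -/
def HolDisk : Subalgebra ℂ (𝔻 → ℂ) where
  carrier := {f | IsHolo f}
  mul_mem' := by
    rintro f g ⟨F, hF, hf⟩ ⟨G, hG, hg⟩
    exact ⟨F * G, hF.mul hG, fun z => by simp [hf z, hg z]⟩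
  add_mem' := by
    rintro f g ⟨F, hF, hf⟩ ⟨G, hG, hg⟩
    exact ⟨F + G, hF.add hG, fun z => by simp [hf z, hg z]⟩
  one_mem' := ⟨fun _ => 1, differentiableOn_const 1, fun _ => rfl⟩
  zero_mem' := ⟨fun _ => 0, differentiableOn_const 0, fun _ => rfl⟩
  algebraMap_mem' := fun c => ⟨fun _ => c, differentiableOn_const c, fun _ => rfl⟩

/-- The `j`-th complex derivative of a holomorphic function on the disk, at a
point `a` (junk value `0` for non-holomorphic functions).  This is well defined
on `𝔻` since any two extensions agree on the open set `𝔻`. -/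
def der (j : ℕ) (a : ℂ) (f : 𝔻 → ℂ) : ℂ :=
  if h : IsHolo f then iteratedDeriv j h.choose a else 0

/-- The `k`-th Taylor coefficient at `0` of a holomorphic function on the disk. -/
def taylorCoeff (k : ℕ) (f : 𝔻 → ℂ) : ℂ := der k 0 f / (Nat.factorial k : ℂ)

/-- The coordinate function `z` on the disk. -/
def zfun : 𝔻 → ℂ := fun z => (z : ℂ)

/-- `z^m O(𝔻)`, as a subspace of functions on the disk. -/
def zO (m : ℕ) : Submodule ℂ (𝔻 → ℂ) where
  carrier := {f | ∃ g, IsHolo g ∧ f = zfun ^ m * g}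
  add_mem' := by
    rintro f₁ f₂ ⟨g₁, hg₁, rfl⟩ ⟨g₂, hg₂, rfl⟩
    exact ⟨g₁ + g₂, add_mem (show g₁ ∈ HolDisk from hg₁) (show g₂ ∈ HolDisk from hg₂),
      by ring⟩
  zero_mem' := ⟨0, (HolDisk : Subalgebra ℂ (𝔻 → ℂ)).zero_mem, by simp⟩
  smul_mem' := by
    rintro c f ⟨g, hg, rfl⟩
    exact ⟨c • g, SMulMemClass.smul_mem c (show g ∈ HolDisk from hg), by
      ext z; simp [zfun]; ring⟩

/-- The quotient vector space `O(𝔻)/A`. -/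
abbrev OmodA (A : Subalgebra ℂ (𝔻 → ℂ)) :=
  HolDisk.toSubmodule ⧸ (A.toSubmodule.comap HolDisk.toSubmodule.subtype)

/-- `cod(A) = dim O(𝔻)/A`. -/
def cod (A : Subalgebra ℂ (𝔻 → ℂ)) : ℕ := Module.finrank ℂ (OmodA A)

/-- `ord(A) = min {k : z^{k+1} O(𝔻) ⊆ A}`. -/
def ord (A : Subalgebra ℂ (𝔻 → ℂ)) : ℕ :=
  sInf {k : ℕ | (zO (k + 1) : Set (𝔻 → ℂ)) ⊆ (A : Set (𝔻 → ℂ))}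

/-- `con(A) = max {n : f⁽ʲ⁾(0) = 0 for all f ∈ A and all 1 ≤ j ≤ n}`. -/
def con (A : Subalgebra ℂ (𝔻 → ℂ)) : ℕ :=
  sSup {n : ℕ | ∀ f ∈ A, ∀ j, 1 ≤ j → j ≤ n → der j 0 f = 0}

/-- A cusp algebra: a unital subalgebra of `O(𝔻)` of finite codimension
containing `z^m O(𝔻)` for some `m ≥ 2`. -/
def IsCuspAlgebra (A : Subalgebra ℂ (𝔻 → ℂ)) : Prop :=
  A ≤ HolDisk ∧ FiniteDimensional ℂ (OmodA A) ∧
    ∃ m, 2 ≤ m ∧ (zO m : Set (𝔻 → ℂ)) ⊆ (A : Set (𝔻 → ℂ))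

/-- A simple cusp algebra: a cusp algebra of contact one. -/
def IsSimpleCuspAlgebra (A : Subalgebra ℂ (𝔻 → ℂ)) : Prop :=
  IsCuspAlgebra A ∧ con A = 1

/-- A primitive for a simple cusp algebra:  `π ∈ A` with `π(0) = 0`,
`π'(0) = 0`, `π''(0) = 2`. -/
def IsPrimitive (A : Subalgebra ℂ (𝔻 → ℂ)) (π : 𝔻 → ℂ) : Prop :=
  π ∈ A ∧ π d0 = 0 ∧ der 1 0 π = 0 ∧ der 2 0 π = 2

/-- `A_n = A ∩ z^{2n} O(𝔻)`. -/
def An (A : Subalgebra ℂ (𝔻 → ℂ)) (n : ℕ) : Submodule ℂ (𝔻 → ℂ) :=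
  A.toSubmodule ⊓ zO (2 * n)

/-- `E_n = A_n / A_{n+1}`. -/
abbrev En (A : Subalgebra ℂ (𝔻 → ℂ)) (n : ℕ) :=
  An A n ⧸ ((An A (n + 1)).comap (An A n).subtype)

/-- `π_α(z) = z² + α₁ z³ + α₂ z⁵ + ⋯ + αₙ z^{2n+1}` (here `α i` is `α_{i+1}`). -/
def piA {n : ℕ} (α : Fin n → ℂ) : 𝔻 → ℂ := fun z =>
  (z : ℂ) ^ 2 + ∑ i : Fin n, α i * (z : ℂ) ^ (2 * (i : ℕ) + 3)

/-- `A(α₁,…,αₙ) = { p ∘ π_α + z^{2n+2} g : deg p ≤ n, g ∈ O(𝔻) }`. -/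
def Aset {n : ℕ} (α : Fin n → ℂ) : Set (𝔻 → ℂ) :=
  {f | ∃ p : Polynomial ℂ, ∃ g : 𝔻 → ℂ, p.natDegree ≤ n ∧ IsHolo g ∧
    ∀ z : 𝔻, f z = p.eval (piA α z) + (z : ℂ) ^ (2 * n + 2) * g z}

open Polynomial Filter Topology

/-! ### Polynomials in `π_β` -/

/-- `π_α` as a polynomial. -/
def piPoly {n : ℕ} (α : Fin n → ℂ) : ℂ[X] :=
  X ^ 2 + ∑ i : Fin n, C (α i) * X ^ (2 * (i : ℕ) + 3)

lemma piA_eq_eval {n : ℕ} (α : Fin n → ℂ) (z : 𝔻) : piA α z = (piPoly α).eval (z : ℂ) := by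
  simp [piA, piPoly, eval_finsetSum]

lemma exists_piPoly_eq {n : ℕ} (α : Fin n → ℂ) :
    ∃ u : ℂ[X], piPoly α = X ^ 2 * u ∧ u.eval 0 = 1 := by
  refine ⟨1 + ∑ i : Fin n, C (α i) * X ^ (2 * (i : ℕ) + 1), ?_, by simp [eval_finsetSum]⟩
  rw [piPoly, mul_add, mul_one, Finset.mul_sum]
  refine congrArg (X ^ 2 + ·) (Finset.sum_congr rfl fun i _ => ?_)
  ring

/-- The index `k` is the order of vanishing of `q` at the origin. -/
lemma exists_even_coeff_ne_zero {n : ℕ} (β : Fin n → ℂ) {q : ℂ[X]} (hq : q ≠ 0) :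
    ∃ k ≤ q.natDegree, (q.comp (piPoly β)).coeff (2 * k) ≠ 0 := by
  obtain ⟨r, hr, hr0⟩ := exists_eq_pow_rootMultiplicity_mul_and_not_dvd q hq 0
  obtain ⟨u, hu, hu0⟩ := exists_piPoly_eq β
  generalize q.rootMultiplicity 0 = k at hr
  rw [C_0, sub_zero] at hr hr0
  have hrne : r ≠ 0 := by rintro rfl; simp at hr0
  refine ⟨k, ?_, ?_⟩
  · rw [hr, natDegree_mul (pow_ne_zero _ X_ne_zero) hrne, natDegree_X_pow]
    omega
  · have h : q.comp (piPoly β) = X ^ (2 * k) * (u ^ k * r.comp (piPoly β)) := by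
      rw [hr, mul_comp, pow_comp, X_comp, hu, mul_pow, ← pow_mul, mul_assoc]
    rw [h, coeff_X_pow_mul', if_pos le_rfl, Nat.sub_self, coeff_zero_eq_eval_zero, eval_mul,
      eval_pow, hu0, one_pow, one_mul, eval_comp, hu, eval_mul, eval_pow, eval_X,
      zero_pow two_ne_zero, zero_mul, ← coeff_zero_eq_eval_zero]
    rwa [X_dvd_iff] at hr0

/-- The only polynomial in `π_β` of degree at most `n` that can agree with `π_α(τ z)` modulo
`z^{2n+2}` is `τ² π_β`; comparing coefficients then relates `α` and `β`. -/
lemma coeff_relation {n : ℕ} (hn : 1 ≤ n) (α β : Fin n → ℂ) (τ : ℂ) (p : ℂ[X])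
    (hp : p.natDegree ≤ n)
    (hdvd : X ^ (2 * n + 2) ∣ (piPoly α).comp (C τ * X) - p.comp (piPoly β)) (j : Fin n) :
    τ ^ (2 * (j : ℕ) + 3) * α j = τ ^ 2 * β j := by
  set q : ℂ[X] := p - C (τ ^ 2) * X with hq
  set D : ℂ[X] := ∑ i : Fin n,
    C (τ ^ (2 * (i : ℕ) + 3) * α i - τ ^ 2 * β i) * X ^ (2 * (i : ℕ) + 3) with hD
  have hqdeg : q.natDegree ≤ n :=
    (natDegree_sub_le _ _).trans (max_le hp (((natDegree_C_mul_le _ _).trans natDegree_X_le).trans hn))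
  have hE : (piPoly α).comp (C τ * X) - p.comp (piPoly β) = D - q.comp (piPoly β) := by
    have h : (piPoly α).comp (C τ * X) = C (τ ^ 2) * piPoly β + D := by
      simp only [piPoly, hD, add_comp, pow_comp, X_comp, sum_comp, mul_comp, C_comp,
        mul_add, Finset.mul_sum, add_assoc, ← Finset.sum_add_distrib, C_sub, C_mul, C_pow]
      refine congrArg₂ (· + ·) (mul_pow _ _ _) (Finset.sum_congr rfl fun i _ => ?_)
      ring
    rw [h, hq, sub_comp, mul_comp, C_comp, X_comp]
    ring
  rw [hE, X_pow_dvd_iff] at hdvd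
  have hDeven (k : ℕ) : D.coeff (2 * k) = 0 := by
    rw [hD, finsetSum_coeff]
    refine Finset.sum_eq_zero fun i _ => ?_
    rw [coeff_C_mul_X_pow, if_neg (by omega)]
  have hq0 : q = 0 := by
    by_contra hne
    obtain ⟨k, hk, hk0⟩ := exists_even_coeff_ne_zero β hne
    have := hdvd (2 * k) (by omega)
    rw [coeff_sub, hDeven, zero_sub, neg_eq_zero] at this
    exact hk0 this
  have hj := hdvd (2 * (j : ℕ) + 3) (by omega)
  rw [hq0, zero_comp, sub_zero, hD, finsetSum_coeff, Finset.sum_eq_single j] at hj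
  · rw [coeff_C_mul_X_pow, if_pos rfl] at hj
    exact sub_eq_zero.1 hj
  · intro i _ hij
    have : (i : ℕ) ≠ j := fun h => hij (Fin.ext h)
    rw [coeff_C_mul_X_pow, if_neg (by omega)]
  · simp

/-! ### Holomorphic functions on the disk -/

lemma disk_mem_nhds {a : ℂ} (ha : a ∈ 𝔻) : 𝔻 ∈ 𝓝 a := Metric.isOpen_ball.mem_nhds ha

/-- A polynomial lying in `z^m O(𝔻)` is divisible by `X^m` as a polynomial. -/
lemma X_pow_dvd_of_eval_eq {F : ℂ[X]} {m : ℕ} {g : 𝔻 → ℂ} (hg : IsHolo g)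
    (h : ∀ z : 𝔻, F.eval (z : ℂ) = (z : ℂ) ^ m * g z) : X ^ m ∣ F := by
  obtain ⟨G, hG, hgG⟩ := hg
  rcases eq_or_ne F 0 with rfl | hF
  · exact dvd_zero _
  obtain ⟨r, hr, hr0⟩ := exists_eq_pow_rootMultiplicity_mul_and_not_dvd F hF 0
  generalize F.rootMultiplicity 0 = k at hr
  rw [C_0, sub_zero] at hr hr0
  rcases le_or_gt m k with hmk | hmk
  · rw [hr]
    exact (pow_dvd_pow X hmk).mul_right r
  exfalso
  apply hr0
  rw [X_dvd_iff, coeff_zero_eq_eval_zero]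
  -- Off the origin `r(z) = z^{m-k} G(z)`, and the right-hand side tends to `0`.
  have hGc : ContinuousAt G 0 := (hG.differentiableAt (disk_mem_nhds zero_mem_disk)).continuousAt
  have h1 : Tendsto (fun z : ℂ => r.eval z) (𝓝[≠] 0) (𝓝 (r.eval 0)) :=
    r.continuous.continuousAt.tendsto.mono_left nhdsWithin_le_nhds
  have h2 : Tendsto (fun z : ℂ => z ^ (m - k) * G z) (𝓝[≠] 0) (𝓝 (0 ^ (m - k) * G 0)) :=
    (((continuous_pow (m - k)).continuousAt.mul hGc).tendsto).mono_left nhdsWithin_le_nhds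
  rw [zero_pow (by omega), zero_mul] at h2
  refine tendsto_nhds_unique_of_eventuallyEq h1 h2 ?_
  filter_upwards [self_mem_nhdsWithin, nhdsWithin_le_nhds (disk_mem_nhds zero_mem_disk)]
    with z hz hzD
  have hz' : z ^ k ≠ 0 := pow_ne_zero _ hz
  have := h ⟨z, hzD⟩
  rw [hgG, hr, eval_mul, eval_pow, eval_X] at this
  apply mul_left_cancel₀ hz'
  rw [this, ← mul_assoc, ← pow_add, Nat.add_sub_cancel' hmk.le]

lemma isHolo_eval (p : ℂ[X]) : IsHolo fun z : 𝔻 => p.eval (z : ℂ) :=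
  ⟨fun z => p.eval z, p.differentiable.differentiableOn, fun _ => rfl⟩

/-- Members of `A(α)` are holomorphic with vanishing derivative at the origin. -/
lemma exists_extension {n : ℕ} {α : Fin n → ℂ} {f : 𝔻 → ℂ} (hf : f ∈ Aset α) :
    ∃ F : ℂ → ℂ, DifferentiableOn ℂ F 𝔻 ∧ (∀ z : 𝔻, f z = F z) ∧ HasDerivAt F 0 0 := by
  obtain ⟨p, g, -, ⟨G, hG, hgG⟩, hfg⟩ := hf
  refine ⟨fun z => (p.comp (piPoly α)).eval z + z ^ (2 * n + 2) * G z, ?_, ?_, ?_⟩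
  · exact (Polynomial.differentiable _).differentiableOn.add
      ((differentiable_pow _).differentiableOn.mul hG)
  · intro z
    simp only [hfg, piA_eq_eval, hgG, eval_comp]
  · have hG0 := (hG.differentiableAt (disk_mem_nhds zero_mem_disk)).hasDerivAt
    obtain ⟨u, hu, -⟩ := exists_piPoly_eq α
    have h := ((p.comp (piPoly α)).hasDerivAt 0).add ((hasDerivAt_pow (2 * n + 2) (0 : ℂ)).mul hG0)
    refine h.congr_deriv ?_
    simp [derivative_comp, hu, derivative_mul]

lemma mul_holo_mem {n : ℕ} (α : Fin n → ℂ) {g : 𝔻 → ℂ} (hg : IsHolo g) :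
    (fun z : 𝔻 => (z : ℂ) ^ (2 * n + 2) * g z) ∈ Aset α :=
  ⟨0, g, by simp, hg, by simp⟩

/-! ### Isomorphisms are rotations -/

section Iso

variable {n : ℕ} {α β : Fin n → ℂ} {ψ : 𝔻 → 𝔻}

lemma exists_holo_inverse (hψ : Function.Bijective ψ) (hψh : IsHolo fun z => (ψ z : ℂ))
    (hA : Aset β = {h | ∃ f ∈ Aset α, h = f ∘ ψ}) :
    ∃ Φ : ℂ → ℂ, DifferentiableOn ℂ Φ 𝔻 ∧ ∀ z : 𝔻, Φ (ψ z) = z := by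
  have h1 := mul_holo_mem β (isHolo_eval 1)
  have h2 := mul_holo_mem β (isHolo_eval X)
  rw [hA] at h1 h2
  obtain ⟨f₁, hf₁, e₁⟩ := h1
  obtain ⟨f₂, hf₂, e₂⟩ := h2
  obtain ⟨F₁, hF₁, hfF₁, -⟩ := exists_extension hf₁
  obtain ⟨F₂, hF₂, hfF₂, -⟩ := exists_extension hf₂
  have e₁' (z : 𝔻) : F₁ (ψ z) = (z : ℂ) ^ (2 * n + 2) := by
    simpa [hfF₁] using (congrFun e₁ z).symm
  have e₂' (z : 𝔻) : F₂ (ψ z) = (z : ℂ) ^ (2 * n + 2) * z := by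
    simpa [hfF₂] using (congrFun e₂ z).symm
  set w₀ : ℂ := ((ψ d0 : 𝔻) : ℂ) with hw₀
  have hw₀D : w₀ ∈ 𝔻 := (ψ d0).2
  have hsurj (w : ℂ) (hw : w ∈ 𝔻 \ {w₀}) : ∃ z : 𝔻, (z : ℂ) ≠ 0 ∧ (ψ z : ℂ) = w := by
    obtain ⟨z, hz⟩ := hψ.2 ⟨w, hw.1⟩
    refine ⟨z, fun h0 => hw.2 ?_, by rw [hz]⟩
    have : z = d0 := Subtype.ext h0
    rw [Set.mem_singleton_iff, hw₀, ← this, hz]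
  have hquot (z : 𝔻) (hz : (z : ℂ) ≠ 0) : F₂ (ψ z) / F₁ (ψ z) = z := by
    rw [e₁', e₂', mul_div_cancel_left₀ _ (pow_ne_zero _ hz)]
  have hd : DifferentiableOn ℂ (fun w => F₂ w / F₁ w) (𝔻 \ {w₀}) := by
    refine (hF₂.mono Set.sdiff_subset).div (hF₁.mono Set.sdiff_subset) fun w hw => ?_
    obtain ⟨z, hz, rfl⟩ := hsurj w hw
    rw [e₁']
    exact pow_ne_zero _ hz
  have hb : BddAbove (norm ∘ (fun w => F₂ w / F₁ w) '' (𝔻 \ {w₀})) := by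
    refine ⟨1, ?_⟩
    rintro _ ⟨w, hw, rfl⟩
    obtain ⟨z, hz, rfl⟩ := hsurj w hw
    simp only [Function.comp_apply, hquot z hz]
    exact (mem_ball_zero_iff.1 z.2).le
  have hΦ := Complex.differentiableOn_update_limUnder_of_bddAbove (disk_mem_nhds hw₀D) hd hb
  set Φ := Function.update (fun w => F₂ w / F₁ w) w₀
    (limUnder (𝓝[≠] w₀) fun w => F₂ w / F₁ w) with hΦdef
  have hne (z : 𝔻) (hz : (z : ℂ) ≠ 0) : Φ (ψ z) = z := by
    have : (ψ z : ℂ) ≠ w₀ := fun h => hz (by rw [hψ.1 (Subtype.ext h)]; rfl)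
    rw [hΦdef, Function.update_of_ne this, hquot z hz]
  refine ⟨Φ, hΦ, fun z => ?_⟩
  by_cases hz : (z : ℂ) = 0
  swap
  · exact hne z hz
  -- At the origin the identity `Φ ∘ ψ = id` follows by continuity.
  obtain rfl : z = d0 := Subtype.ext hz
  obtain ⟨Ψ, hΨ, hψΨ : ∀ z : 𝔻, (ψ z : ℂ) = Ψ z⟩ := hψh
  have hΨ0 : Ψ 0 = w₀ := (hψΨ d0).symm
  have c1 : ContinuousAt Ψ 0 := (hΨ.differentiableAt (disk_mem_nhds zero_mem_disk)).continuousAt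
  have c2 : ContinuousAt Φ (Ψ 0) := by
    rw [hΨ0]
    exact (hΦ.differentiableAt (disk_mem_nhds hw₀D)).continuousAt
  have t1 : Tendsto (fun z => Φ (Ψ z)) (𝓝[≠] 0) (𝓝 (Φ (Ψ 0))) :=
    (c2.comp c1).tendsto.mono_left nhdsWithin_le_nhds
  have t2 : Tendsto (fun z : ℂ => z) (𝓝[≠] 0) (𝓝 0) := tendsto_id.mono_left nhdsWithin_le_nhds
  rw [← hw₀, ← hΨ0]
  refine tendsto_nhds_unique_of_eventuallyEq t1 t2 ?_
  filter_upwards [self_mem_nhdsWithin, nhdsWithin_le_nhds (disk_mem_nhds zero_mem_disk)]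
    with z hz hzD
  have := hψΨ ⟨z, hzD⟩
  rw [← this]
  exact hne ⟨z, hzD⟩ hz

lemma deriv_mul_deriv_eq_one {Ψ Φ : ℂ → ℂ} (hΨ : DifferentiableOn ℂ Ψ 𝔻)
    (hψΨ : ∀ z : 𝔻, (ψ z : ℂ) = Ψ z) (hΦ : DifferentiableOn ℂ Φ 𝔻)
    (hinv : ∀ z : 𝔻, Φ (ψ z) = z) : deriv Φ (Ψ 0) * deriv Ψ 0 = 1 := by
  have hΨ0 : Ψ 0 ∈ 𝔻 := by
    have := hψΨ d0
    rw [show ((d0 : 𝔻) : ℂ) = 0 from rfl] at this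
    exact this ▸ (ψ d0).2
  have h1 := (hΨ.differentiableAt (disk_mem_nhds zero_mem_disk)).hasDerivAt
  have h2 := (hΦ.differentiableAt (disk_mem_nhds hΨ0)).hasDerivAt
  refine (h2.comp 0 h1).unique ((hasDerivAt_id (0 : ℂ)).congr_of_eventuallyEq ?_)
  filter_upwards [disk_mem_nhds zero_mem_disk] with z hz
  simpa [hψΨ] using hinv ⟨z, hz⟩

lemma map_zero_eq_zero {Ψ : ℂ → ℂ} (hΨ : DifferentiableOn ℂ Ψ 𝔻)
    (hψΨ : ∀ z : 𝔻, (ψ z : ℂ) = Ψ z) (hd : deriv Ψ 0 ≠ 0)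
    (hA : Aset β = {h | ∃ f ∈ Aset α, h = f ∘ ψ}) : Ψ 0 = 0 := by
  have hmem : (fun z : 𝔻 => (z : ℂ) ^ (2 * n + 2) * (1 : ℂ[X]).eval (z : ℂ)) ∘ ψ ∈ Aset β := by
    rw [hA]
    exact ⟨_, mul_holo_mem α (isHolo_eval 1), rfl⟩
  obtain ⟨F, -, hF, hF0⟩ := exists_extension hmem
  have h1 := ((hΨ.differentiableAt (disk_mem_nhds zero_mem_disk)).hasDerivAt).pow (2 * n + 2)
  have h2 := h1.unique (hF0.congr_of_eventuallyEq (by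
    filter_upwards [disk_mem_nhds zero_mem_disk] with z hz
    simpa [hψΨ] using hF ⟨z, hz⟩))
  have h3 : ((2 * n + 2 : ℕ) : ℂ) ≠ 0 := Nat.cast_ne_zero.2 (by omega)
  exact pow_eq_zero_iff (by omega) |>.1
    ((mul_eq_zero.1 ((mul_eq_zero.1 h2).resolve_right hd)).resolve_left h3)

lemma eq_rotation (hψ : Function.Bijective ψ) (hψh : IsHolo fun z => (ψ z : ℂ))
    (hA : Aset β = {h | ∃ f ∈ Aset α, h = f ∘ ψ}) :
    ∃ τ : ℂ, ‖τ‖ = 1 ∧ ∀ z : 𝔻, (ψ z : ℂ) = τ * z := by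
  obtain ⟨Φ, hΦ, hinv⟩ := exists_holo_inverse hψ hψh hA
  obtain ⟨Ψ, hΨ, hψΨ : ∀ z : 𝔻, (ψ z : ℂ) = Ψ z⟩ := hψh
  have hprod := deriv_mul_deriv_eq_one hΨ hψΨ hΦ hinv
  have hΨ0 := map_zero_eq_zero hΨ hψΨ (right_ne_zero_of_mul_eq_one hprod) hA
  have hψ0 : (ψ d0 : ℂ) = 0 := (hψΨ d0).trans hΨ0
  have hΦ0 : Φ 0 = 0 := by
    rw [← hψ0]
    exact hψ0 ▸ hinv d0
  rw [hΨ0] at hprod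
  have mΨ : Set.MapsTo Ψ (Metric.ball 0 1) (Metric.closedBall (Ψ 0) 1) := by
    intro z hz
    rw [hΨ0, ← hψΨ ⟨z, hz⟩]
    exact Metric.ball_subset_closedBall (ψ _).2
  have mΦ : Set.MapsTo Φ (Metric.ball 0 1) (Metric.closedBall (Φ 0) 1) := by
    intro w hw
    obtain ⟨z, hz⟩ := hψ.2 ⟨w, hw⟩
    have := hinv z
    rw [hz] at this
    rw [hΦ0, show Φ w = z from this]
    exact Metric.ball_subset_closedBall z.2
  have nΨ := Complex.norm_deriv_le_one_of_mapsTo_ball hΨ mΨ one_pos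
  have nΦ := Complex.norm_deriv_le_one_of_mapsTo_ball hΦ mΦ one_pos
  have hnorm : ‖deriv Ψ 0‖ = 1 := by
    have : ‖deriv Φ 0‖ * ‖deriv Ψ 0‖ = 1 := by rw [← norm_mul, hprod, norm_one]
    nlinarith [norm_nonneg (deriv Φ 0), norm_nonneg (deriv Ψ 0)]
  have haff := Complex.affine_of_mapsTo_ball_of_norm_dslope_eq_div hΨ mΨ zero_mem_disk
    (by rw [dslope_same, hnorm, div_one])
  refine ⟨deriv Ψ 0, hnorm, fun z => ?_⟩
  have := haff z.2
  simp only [hΨ0, dslope_same, sub_zero, zero_add, smul_eq_mul] at this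
  rw [hψΨ, this, mul_comm]

end Iso

/-! ### Rotations -/

/-- The rotation `z ↦ τ z` of the disk. -/
def diskRot (τ : ℂ) (hτ : ‖τ‖ = 1) : 𝔻 → 𝔻 := fun z =>
  ⟨τ * z, mem_ball_zero_iff.2 (by
    rw [norm_mul, hτ, one_mul]
    exact mem_ball_zero_iff.1 z.2)⟩

lemma diskRot_diskRot {τ σ : ℂ} (hτ : ‖τ‖ = 1) (hσ : ‖σ‖ = 1) (h : τ * σ = 1) (z : 𝔻) :
    diskRot τ hτ (diskRot σ hσ z) = z :=
  Subtype.ext (by simp [diskRot, ← mul_assoc, h])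

lemma comp_diskRot_mem {n : ℕ} {α β : Fin n → ℂ} {τ : ℂ} (hτ : ‖τ‖ = 1)
    (h : ∀ j : Fin n, β j = τ ^ (2 * (j : ℕ) + 1) * α j) {f : 𝔻 → ℂ} (hf : f ∈ Aset α) :
    f ∘ diskRot τ hτ ∈ Aset β := by
  obtain ⟨p, g, hp, ⟨G, hG, hgG⟩, hfg⟩ := hf
  have hmaps : Set.MapsTo (fun z : ℂ => τ * z) 𝔻 𝔻 := fun z hz => (diskRot τ hτ ⟨z, hz⟩).2
  refine ⟨p.comp (C (τ ^ 2) * X), fun z => τ ^ (2 * n + 2) * g (diskRot τ hτ z), ?_,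
    ⟨fun z => τ ^ (2 * n + 2) * G (τ * z), ?_, fun z => ?_⟩, fun z => ?_⟩
  · refine natDegree_comp_le.trans ?_
    calc p.natDegree * (C (τ ^ 2) * X : ℂ[X]).natDegree ≤ p.natDegree * 1 :=
          Nat.mul_le_mul_left _ ((natDegree_C_mul_le _ _).trans natDegree_X_le)
      _ ≤ n := by rwa [mul_one]
  · exact (hG.comp (differentiable_id.const_mul τ).differentiableOn hmaps).const_mul _
  · simp only [hgG]
    rfl
  · have hpi : piA α (diskRot τ hτ z) = τ ^ 2 * piA β z := by
      simp only [piA, diskRot, h, mul_add, Finset.mul_sum, mul_pow]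
      congr 1
      refine Finset.sum_congr rfl fun i _ => ?_
      ring
    simp only [Function.comp_apply, hfg, hpi, eval_comp, eval_mul, eval_C, eval_X]
    simp only [diskRot]
    ring

/-- There is a bijective holomorphic `ψ : 𝔻 → 𝔻` with
`A(β) = {f ∘ ψ : f ∈ A(α)}` iff `β_j = τ^{2j-1} α_j` for some unimodular `τ`. -/
theorem stmt_13 (n : ℕ) (hn : 1 ≤ n) (α β : Fin n → ℂ) :
    (∃ ψ : 𝔻 → 𝔻, Function.Bijective ψ ∧ IsHolo (fun z => (ψ z : ℂ)) ∧
        Aset β = {h | ∃ f ∈ Aset α, h = f ∘ ψ}) ↔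
      ∃ τ : ℂ, ‖τ‖ = 1 ∧ ∀ j : Fin n, β j = τ ^ (2 * (j : ℕ) + 1) * α j := by
  constructor
  · rintro ⟨ψ, hψ, hψh, hA⟩
    obtain ⟨τ, hτ, hrot⟩ := eq_rotation hψ hψh hA
    refine ⟨τ, hτ, fun j => ?_⟩
    have hτ0 : τ ≠ 0 := by
      rintro rfl
      simp at hτ
    have hmem : piA α ∘ ψ ∈ Aset β := by
      rw [hA]
      exact ⟨_, ⟨X, 0, by simpa using hn, HolDisk.zero_mem, by simp⟩, rfl⟩
    obtain ⟨p, g, hp, hg, hpg⟩ := hmem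
    have hdvd : X ^ (2 * n + 2) ∣ (piPoly α).comp (C τ * X) - p.comp (piPoly β) := by
      refine X_pow_dvd_of_eval_eq hg fun z => ?_
      have := hpg z
      rw [Function.comp_apply, piA_eq_eval, piA_eq_eval, hrot] at this
      rw [eval_sub, eval_comp, eval_comp, eval_mul, eval_C, eval_X, this]
      ring
    have hj := coeff_relation hn α β τ p hp hdvd j
    apply mul_left_cancel₀ (pow_ne_zero 2 hτ0)
    rw [← hj]
    ring
  · rintro ⟨τ, hτ, h⟩
    have hτ0 : τ ≠ 0 := by
      rintro rfl
      simp at hτ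
    have hτ' : ‖τ⁻¹‖ = 1 := by rw [norm_inv, hτ, inv_one]
    have hl := diskRot_diskRot hτ' hτ (inv_mul_cancel₀ hτ0)
    have hr := diskRot_diskRot hτ hτ' (mul_inv_cancel₀ hτ0)
    refine ⟨diskRot τ hτ, ⟨Function.LeftInverse.injective hl, Function.RightInverse.surjective hr⟩,
      ⟨fun z => τ * z, (differentiable_id.const_mul τ).differentiableOn, fun _ => rfl⟩, ?_⟩
    ext f
    constructor
    · intro hf
      refine ⟨f ∘ diskRot τ⁻¹ hτ', comp_diskRot_mem hτ' (fun j => ?_) hf, ?_⟩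
      · rw [h, ← mul_assoc, ← mul_pow, inv_mul_cancel₀ hτ0, one_pow, one_mul]
      · funext z
        simp only [Function.comp_apply, hl]
    · rintro ⟨f, hf, rfl⟩
      exact comp_diskRot_mem hτ h hf

end
end

section
/- Let A be a simple cusp algebra. Then there exist functions h₁, h₂ ∈ A such that the map h = (h₁, h₂) : 𝔻 → ℂ² is injective on 𝔻 ∖ {0}, and A equals the closure, in the topology of uniform convergence on compact subsets of 𝔻, of the algebra of all polynomials in h₁ and h₂ (that is, of { P(h₁(z), h₂(z)) : P a polynomial in two complex variables }). -/
/-!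
The generators are explicit. Let `2 * k + 1` be the least odd order of vanishing at `0` of an
element of `A`. As the contact is one, `A` has an element of order two but none of order one, and
multiplying elements shows that every integer `≥ 2 * k` is the order of an element; hence
`z ^ (2 * k) O(𝔻) ⊆ A` (`containsPow_of_orders`). Correcting the element of order two modulo
`z ^ (2 * k) O(𝔻)` produces `X = z ^ 2 * exp g ∈ A` with `g` entire (`exists_exp_approx`), and
`h₁ = X`, `h₂ = X ^ k * z` work. Injectivity off the origin is clear, since `X` has no zero there
and `z = h₂ / X ^ k`.

Every holomorphic `F` has an expansion `F = ∑ X ^ n * (a n + b n * z)` near `0` (`Sop_expand`), and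
`F ∈ A` if and only if `b n = 0` for all `n < k` (`mem_iff_bco`): the tail lies in
`z ^ (2 * k) O(𝔻)`, and a first nonzero `b n` would give an element of `A` of odd order
`2 * n + 1`. As the `b n` are continuous for locally uniform convergence, `A` is closed.

For density, note that the partial sums of this expansion are polynomials in `h₁` and `h₂` when
`F ∈ A`, but converge only near `0`. By Hahn–Banach it is enough to treat a continuous functional
`ℓ` on `C(closedBall 0 r)`, `r < 1`, which annihilates `X ^ i * z ^ q` whenever `k * q ≤ i`, and to
show that on holomorphic functions `ℓ` is continuous for uniform convergence on *every* small disk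
around `0` (`functional_bound`). Equivalently, the Cauchy transform `J T = ℓ (1 / (T - z))`,
defined for large `T`, should continue analytically to `ℂ \ {0}` (`moments_decay`). Write
`1 / (T - z) = (1 / (X T - X z)) * ((X T - X z) / (T - z))`, expand the first factor in a
geometric series in `X z` and the second in powers of `z`:
`J T = ∑' q, c q T * ∑' i, ℓ (X ^ i * z ^ q) / X T ^ (i + 1)`.
By the annihilation hypothesis the inner sum runs over `i < k * q` only, so it is polynomial in
`1 / X T`. Since `X` is entire, the `c q T` decay faster than any geometric sequence, and so the
series converges wherever `X T ≠ 0`, that is, on `ℂ \ {0}` (`cauchyCont_diff`). The identity with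
the Cauchy transform holds where `‖T‖` and `‖X T‖` are both large (`hasSum_cauchyCont`), a
nonempty open set by Liouville's theorem.
-/

open scoped Classical

noncomputable section

open Filter Topology

/-! ### Taylor coefficients and the backward shift -/

/-- Taylor expansion on a disk, with the Cauchy estimates for its coefficients. -/
lemma exists_taylor {F : ℂ → ℂ} {R : ℝ} (hF : DifferentiableOn ℂ F (Metric.ball 0 R)) :
    ∃ a : ℕ → ℂ, (∀ z ∈ Metric.ball (0 : ℂ) R, HasSum (fun n => a n * z ^ n) (F z)) ∧
      ∀ ρ, 0 < ρ → ρ < R → ∀ M, (∀ z : ℂ, ‖z‖ ≤ ρ → ‖F z‖ ≤ M) →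
        ∀ n, ‖a n‖ ≤ M / ρ ^ n := by
  refine ⟨fun n => (n.factorial : ℂ)⁻¹ * iteratedDeriv n F 0, fun z hz => ?_,
    fun ρ hρ hρR M hM n => ?_⟩
  · have h := Complex.hasSum_taylorSeries_on_ball hF hz
    simp only [sub_zero, smul_eq_mul] at h
    have e : (fun n => (n.factorial : ℂ)⁻¹ * iteratedDeriv n F 0 * z ^ n)
        = fun n => (n.factorial : ℂ)⁻¹ * (z ^ n * iteratedDeriv n F 0) := by
      funext n; ring
    rw [e]
    exact h
  · have hcl : DiffContOnCl ℂ F (Metric.ball 0 ρ) :=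
      (hF.mono (Metric.closedBall_subset_ball hρR)).diffContOnCl_ball subset_rfl
    have h := Complex.norm_iteratedDeriv_le_of_forall_mem_sphere_norm_le n hρ hcl
      (fun z hz => hM z (by simpa using (mem_sphere_zero_iff_norm.1 hz).le))
    have hf : (0 : ℝ) < n.factorial := by exact_mod_cast n.factorial_pos
    rw [norm_mul, norm_inv, Complex.norm_natCast, inv_mul_le_iff₀ hf]
    linarith [h, (mul_div_assoc (n.factorial : ℝ) M (ρ ^ n))]

lemma taylor_unique {a b : ℕ → ℂ} {F : ℂ → ℂ}
    (ha : ∀ᶠ z in 𝓝 (0 : ℂ), HasSum (fun n => a n * z ^ n) (F z))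
    (hb : ∀ᶠ z in 𝓝 (0 : ℂ), HasSum (fun n => b n * z ^ n) (F z)) : a = b := by
  have key : ∀ c : ℕ → ℂ, (∀ᶠ z in 𝓝 (0 : ℂ), HasSum (fun n => c n * z ^ n) (F z)) →
      HasFPowerSeriesAt F (FormalMultilinearSeries.ofScalars ℂ c) 0 := by
    intro c hc
    rw [hasFPowerSeriesAt_iff]
    filter_upwards [hc] with z hz
    simpa [FormalMultilinearSeries.coeff_ofScalars, mul_comm] using hz
  have h := (key a ha).eq_formalMultilinearSeries (key b hb)
  funext n
  have := congrArg (fun p => FormalMultilinearSeries.coeff p n) h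
  simpa [FormalMultilinearSeries.coeff_ofScalars] using this

/-- The backward shift `f ↦ (f - f 0) / z`, with value `deriv f 0` at `0`. -/
def sh (f : ℂ → ℂ) : ℂ → ℂ := dslope f 0

lemma sh_spec (f : ℂ → ℂ) (z : ℂ) : f z = f 0 + z * sh f z := by
  have := sub_smul_dslope f 0 z
  simp only [sub_zero, smul_eq_mul] at this
  rw [sh, this]; ring

lemma sh_diffOn {f : ℂ → ℂ} {s : Set ℂ} (hs : s ∈ 𝓝 (0 : ℂ)) (hf : DifferentiableOn ℂ f s) :
    DifferentiableOn ℂ (sh f) s :=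
  (Complex.differentiableOn_dslope hs).2 hf

lemma sh_diff {f : ℂ → ℂ} (hf : Differentiable ℂ f) : Differentiable ℂ (sh f) := by
  rw [← differentiableOn_univ] at hf ⊢
  exact sh_diffOn univ_mem hf

lemma norm_le_of_sphere {f : ℂ → ℂ} {ρ M : ℝ}
    (hf : DifferentiableOn ℂ f (Metric.closedBall 0 ρ))
    (hM : ∀ z : ℂ, ‖z‖ = ρ → ‖f z‖ ≤ M) (hρ : 0 < ρ) (z : ℂ) (hz : ‖z‖ ≤ ρ) : ‖f z‖ ≤ M := by
  refine Complex.norm_le_of_forall_mem_frontier_norm_le (U := Metric.ball 0 ρ)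
    Metric.isBounded_ball (hf.diffContOnCl_ball subset_rfl) ?_ ?_
  · intro w hw
    rw [frontier_ball _ hρ.ne'] at hw
    exact hM w (mem_sphere_zero_iff_norm.1 hw)
  · rw [closure_ball _ hρ.ne']
    simpa using hz

/-- By the maximum principle the backward shift is bounded for the sup norm on a disk. -/
lemma sh_bound {f : ℂ → ℂ} {s : Set ℂ} (hs : IsOpen s) {ρ M : ℝ} (hρ : 0 < ρ)
    (hsub : Metric.closedBall 0 ρ ⊆ s) (hf : DifferentiableOn ℂ f s)
    (hM : ∀ z : ℂ, ‖z‖ ≤ ρ → ‖f z‖ ≤ M) (z : ℂ) (hz : ‖z‖ ≤ ρ) :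
    ‖sh f z‖ ≤ (2 / ρ) * M := by
  have h0 : (0 : ℂ) ∈ s := hsub (Metric.mem_closedBall_self hρ.le)
  refine norm_le_of_sphere ((sh_diffOn (hs.mem_nhds h0) hf).mono hsub) ?_ hρ z hz
  intro w hw
  have h1 : w * sh f w = f w - f 0 := by rw [sh_spec f w]; ring
  have h2 : ‖w‖ * ‖sh f w‖ ≤ 2 * M := by
    rw [← norm_mul, h1]
    linarith [norm_sub_le (f w) (f 0), hM w hw.le, hM 0 (by simpa using hρ.le)]
  rw [hw] at h2
  rw [div_mul_eq_mul_div, le_div_iff₀ hρ]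
  linarith

lemma sh_iter_diff {f : ℂ → ℂ} (hf : Differentiable ℂ f) (n : ℕ) :
    Differentiable ℂ (sh^[n] f) := by
  induction n with
  | zero => simpa using hf
  | succ n ih => rw [Function.iterate_succ_apply']; exact sh_diff ih

/-- For entire `f` the radius `ρ` is arbitrary, so iterated shifts decay faster than any
geometric sequence. -/
lemma sh_iter_bound {f : ℂ → ℂ} (hf : Differentiable ℂ f) {ρ M : ℝ} (hρ : 0 < ρ)
    (hM : ∀ z : ℂ, ‖z‖ ≤ ρ → ‖f z‖ ≤ M) (n : ℕ) (z : ℂ) (hz : ‖z‖ ≤ ρ) :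
    ‖(sh^[n] f) z‖ ≤ (2 / ρ) ^ n * M := by
  induction n generalizing z with
  | zero => simpa using hM z hz
  | succ n ih =>
    rw [Function.iterate_succ_apply', pow_succ', mul_assoc]
    exact sh_bound isOpen_univ hρ (Set.subset_univ _) (sh_iter_diff hf n).differentiableOn ih z hz

lemma exists_bound_closedBall {f : ℂ → ℂ} (hf : Continuous f) (ρ : ℝ) :
    ∃ M, 0 < M ∧ ∀ z : ℂ, ‖z‖ ≤ ρ → ‖f z‖ ≤ M := by
  obtain ⟨M, hM⟩ := (isCompact_closedBall (0 : ℂ) ρ).exists_bound_of_continuousOn hf.continuousOn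
  exact ⟨max M 1, lt_max_of_lt_right one_pos,
    fun z hz => (hM z (by simpa using hz)).trans (le_max_left _ _)⟩

lemma sh_partial (f : ℂ → ℂ) (T z : ℂ) (n : ℕ) :
    (T - z) * ∑ q ∈ Finset.range n, (sh^[q + 1] f) T * z ^ q
      = f T - f z - z ^ n * ((sh^[n] f) T - (sh^[n] f) z) := by
  induction n with
  | zero => simp
  | succ n ih =>
    rw [Finset.sum_range_succ, mul_add, ih]
    have h1 := sh_spec (sh^[n] f) T
    have h2 := sh_spec (sh^[n] f) z
    rw [Function.iterate_succ_apply']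
    rw [h1, h2]
    ring

/-- Expansion in powers of `z` of the divided difference of an entire function. -/
lemma sh_hasSum {f : ℂ → ℂ} (hf : Differentiable ℂ f) (T z : ℂ) (hTz : T ≠ z) :
    HasSum (fun q => (sh^[q + 1] f) T * z ^ q) ((f T - f z) / (T - z)) ∧
    ∀ r, ‖z‖ ≤ r → Summable (fun q => ‖(sh^[q + 1] f) T‖ * r ^ q) := by
  have main : ∀ r, 0 ≤ r → Summable (fun q => ‖(sh^[q + 1] f) T‖ * r ^ q) := by
    intro r hr
    set R := ‖T‖ + 4 * r + 1 with hR
    have hR0 : 0 < R := by positivity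
    obtain ⟨M, hM0, hM⟩ := exists_bound_closedBall hf.continuous R
    have hb : ∀ q, ‖(sh^[q + 1] f) T‖ * r ^ q ≤ (2 / R * M) * (1 / 2) ^ q := by
      intro q
      have h1 := sh_iter_bound hf hR0 hM (q + 1) T (by rw [hR]; linarith)
      have h2 : 2 / R * r ≤ 1 / 2 := by
        rw [div_mul_eq_mul_div, div_le_iff₀ hR0]; linarith [norm_nonneg T]
      calc ‖(sh^[q + 1] f) T‖ * r ^ q ≤ ((2 / R) ^ (q + 1) * M) * r ^ q := by gcongr
        _ = (2 / R * M) * (2 / R * r) ^ q := by rw [mul_pow]; ring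
        _ ≤ _ := by gcongr
    refine Summable.of_nonneg_of_le (fun q => by positivity) hb ?_
    exact (summable_geometric_of_lt_one (by norm_num) (by norm_num)).mul_left _
  refine ⟨?_, fun r hr => main r ((norm_nonneg z).trans hr)⟩
  have hs : Summable (fun q => (sh^[q + 1] f) T * z ^ q) := by
    refine Summable.of_norm ?_
    simpa [norm_mul, norm_pow] using main ‖z‖ (norm_nonneg z)
  have hlim : Tendsto (fun n => z ^ n * ((sh^[n] f) T - (sh^[n] f) z)) atTop (𝓝 0) := by
    set R := ‖T‖ + 4 * ‖z‖ + 1 with hR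
    have hR0 : 0 < R := by positivity
    obtain ⟨M, hM0, hM⟩ := exists_bound_closedBall hf.continuous R
    refine squeeze_zero_norm (a := fun n => (2 * M) * (1 / 2 : ℝ) ^ n) (fun n => ?_) ?_
    · have h1 := sh_iter_bound hf hR0 hM n T (by rw [hR]; linarith [norm_nonneg z])
      have h3 := sh_iter_bound hf hR0 hM n z
        (by rw [hR]; linarith [norm_nonneg z, norm_nonneg T])
      have h2 : ‖z‖ * (2 / R) ≤ 1 / 2 := by
        rw [mul_div_assoc', div_le_iff₀ hR0]; linarith [norm_nonneg T]
      have h4 := norm_sub_le ((sh^[n] f) T) ((sh^[n] f) z)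
      rw [norm_mul, norm_pow]
      calc ‖z‖ ^ n * ‖(sh^[n] f) T - (sh^[n] f) z‖ ≤ ‖z‖ ^ n * (2 * ((2 / R) ^ n * M)) := by
            gcongr; linarith
        _ = (2 * M) * (‖z‖ * (2 / R)) ^ n := by rw [mul_pow]; ring
        _ ≤ _ := by gcongr
    · simpa using (tendsto_pow_atTop_nhds_zero_of_lt_one (by norm_num : (0 : ℝ) ≤ 1 / 2)
        (by norm_num)).const_mul (2 * M)
  have hne : T - z ≠ 0 := sub_ne_zero.2 hTz
  have h2 : Tendsto (fun n => ∑ q ∈ Finset.range n, (sh^[q + 1] f) T * z ^ q) atTop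
      (𝓝 ((f T - f z) / (T - z))) := by
    have h3 : Tendsto (fun n => (f T - f z - z ^ n * ((sh^[n] f) T - (sh^[n] f) z)) / (T - z))
        atTop (𝓝 ((f T - f z - 0) / (T - z))) := (hlim.const_sub _).div_const _
    rw [sub_zero] at h3
    refine h3.congr (fun n => ?_)
    rw [← sh_partial, mul_div_cancel_left₀ _ hne]
  have h4 := hs.hasSum
  rwa [tendsto_nhds_unique h4.tendsto_sum_nat h2] at h4

/-! ### Analytic functionals annihilating the monomials of the algebra -/

lemma isPreconnected_puncturedBall {ρ : ℝ} (hρ : 0 < ρ) :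
    IsPreconnected (Metric.ball (0 : ℂ) ρ \ {0}) := by
  have h1 : IsPreconnected {w : ℂ | w.re < Real.log ρ} :=
    (convex_halfSpace_re_lt _).isPreconnected
  have h2 := h1.image Complex.exp Complex.continuous_exp.continuousOn
  convert h2 using 1
  ext z
  simp only [Set.mem_sdiff, mem_ball_zero_iff, Set.mem_singleton_iff, Set.mem_image,
    Set.mem_ofPred_eq]
  constructor
  · rintro ⟨hz, hz0⟩
    refine ⟨Complex.log z, ?_, Complex.exp_log hz0⟩
    rw [Complex.log_re]
    exact Real.log_lt_log (norm_pos_iff.2 hz0) hz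
  · rintro ⟨w, hw, rfl⟩
    refine ⟨?_, Complex.exp_ne_zero w⟩
    rw [Complex.norm_exp]
    exact (Real.lt_log_iff_exp_lt hρ).1 hw

/-- If the germ at infinity `∑ m j / T ^ (j + 1)` continues analytically to `ℂ \ {0}`, then
`∑ m j * w ^ j` is entire, so that `m` decays faster than any geometric sequence. -/
lemma moments_decay {m : ℕ → ℂ} {L r : ℝ} (hr : 0 < r) (hm : ∀ j, ‖m j‖ ≤ L * r ^ j)
    {J : ℂ → ℂ} (hJ : DifferentiableOn ℂ J {0}ᶜ) {W : Set ℂ} (hW : IsOpen W)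
    (hWr : ∀ T ∈ W, r < ‖T‖) (hWne : W.Nonempty)
    (hs : ∀ T ∈ W, HasSum (fun j => m j * (T⁻¹) ^ (j + 1)) (J T)) (R : ℝ) (hR : 0 < R) :
    ∃ C, 0 ≤ C ∧ ∀ j, ‖m j‖ ≤ C / R ^ j := by
  have hL : 0 ≤ L := by simpa using (norm_nonneg _).trans (hm 0)
  set H : ℂ → ℂ := fun w => ∑' j, m j * w ^ j with hH
  set D : ℂ → ℂ := fun w => J w⁻¹ * w⁻¹ with hD
  have hsum : ∀ s, 0 ≤ s → s < r⁻¹ → Summable (fun j => L * (r * s) ^ j) := by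
    intro s hs0 hs1
    refine (summable_geometric_of_lt_one (by positivity) ?_).mul_left L
    calc r * s < r * r⁻¹ := by gcongr
      _ = 1 := mul_inv_cancel₀ hr.ne'
  have hle : ∀ s, ∀ w : ℂ, ‖w‖ ≤ s → ∀ j, ‖m j * w ^ j‖ ≤ L * (r * s) ^ j := by
    intro s w hw j
    rw [norm_mul, norm_pow, mul_pow, ← mul_assoc]
    have := hm j
    gcongr
  have hHs : ∀ w : ℂ, ‖w‖ < r⁻¹ → HasSum (fun j => m j * w ^ j) (H w) := fun w hw =>
    (Summable.of_norm_bounded (hsum _ (norm_nonneg w) hw) (hle _ w le_rfl)).hasSum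
  have hHd : DifferentiableOn ℂ H (Metric.ball 0 r⁻¹) := by
    intro w hw
    rw [mem_ball_zero_iff] at hw
    obtain ⟨s, hs1, hs2⟩ := exists_between hw
    have h0 : 0 ≤ s := (norm_nonneg w).trans hs1.le
    have h1 : DifferentiableOn ℂ H (Metric.ball 0 s) :=
      Complex.differentiableOn_tsum_of_summable_norm (hsum s h0 hs2)
        (fun j => by fun_prop) Metric.isOpen_ball
        (fun j v hv => hle s v (mem_ball_zero_iff.1 hv).le j)
    exact (h1.differentiableAt (Metric.isOpen_ball.mem_nhds
      (mem_ball_zero_iff.2 hs1))).differentiableWithinAt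
  have hDd : DifferentiableOn ℂ D {0}ᶜ := by
    have hinv : DifferentiableOn ℂ (fun w : ℂ => w⁻¹) {0}ᶜ := differentiableOn_inv
    refine DifferentiableOn.mul (hJ.comp hinv ?_) hinv
    intro w hw
    simpa using hw
  have hpo : IsOpen (Metric.ball (0 : ℂ) r⁻¹ \ {0}) :=
    Metric.isOpen_ball.sdiff isClosed_singleton
  have hagree : Set.EqOn H D (Metric.ball 0 r⁻¹ \ {0}) := by
    obtain ⟨T, hT⟩ := hWne
    have hTr := hWr T hT
    have hT0 : T ≠ 0 := norm_pos_iff.1 (hr.trans hTr)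
    have hcont : ContinuousAt (fun w : ℂ => w⁻¹) T⁻¹ := continuousAt_inv₀ (inv_ne_zero hT0)
    have hev : ∀ᶠ w in 𝓝 T⁻¹, w⁻¹ ∈ W :=
      hcont (by simpa using hW.mem_nhds hT)
    refine AnalyticOnNhd.eqOn_of_preconnected_of_eventuallyEq
      ((hHd.mono Set.sdiff_subset).analyticOnNhd hpo)
      ((hDd.mono (fun w hw => hw.2)).analyticOnNhd hpo)
      (isPreconnected_puncturedBall (inv_pos.2 hr)) (z₀ := T⁻¹) ?_ ?_
    · refine ⟨?_, by simpa using hT0⟩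
      rw [mem_ball_zero_iff, norm_inv]
      exact (inv_lt_inv₀ (hr.trans hTr) hr).2 hTr
    · filter_upwards [hev] with w hw
      have h1 := hWr _ hw
      have h0 : 0 < ‖w⁻¹‖ := hr.trans h1
      have hw0 : w ≠ 0 := by
        rintro rfl
        simp at h0
      have hwr : ‖w‖ < r⁻¹ := by
        rw [norm_inv] at h1
        exact (lt_inv_comm₀ hr (norm_pos_iff.2 hw0)).1 h1
      have h2 := (hs _ hw).mul_right w⁻¹
      have e : (fun j => m j * w⁻¹⁻¹ ^ (j + 1) * w⁻¹) = fun j => m j * w ^ j := by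
        funext j
        rw [inv_inv, pow_succ]
        field_simp
      rw [e] at h2
      exact (hHs w hwr).unique h2
  set E : ℂ → ℂ := fun w => if ‖w‖ < r⁻¹ then H w else D w with hE
  have hED : Set.EqOn E D {0}ᶜ := by
    intro w hw
    by_cases h : ‖w‖ < r⁻¹
    · simp only [hE, if_pos h]
      exact hagree ⟨mem_ball_zero_iff.2 h, hw⟩
    · simp only [hE, if_neg h]
  have hEH : Set.EqOn E H (Metric.ball 0 r⁻¹) := by
    intro w hw
    simp only [hE, if_pos (mem_ball_zero_iff.1 hw)]
  have hEd : Differentiable ℂ E := by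
    intro w
    by_cases h : w = 0
    · subst h
      exact (hHd.congr hEH).differentiableAt (Metric.ball_mem_nhds _ (inv_pos.2 hr))
    · exact (hDd.congr hED).differentiableAt (isOpen_compl_singleton.mem_nhds h)
  obtain ⟨a, ha, hab⟩ := exists_taylor (hEd.differentiableOn (s := Metric.ball 0 (R + 1)))
  have ham : a = m := by
    refine taylor_unique (F := E) ?_ ?_
    · filter_upwards [Metric.ball_mem_nhds (0 : ℂ) (by linarith : 0 < R + 1)] with w hw
      exact ha w hw
    · filter_upwards [Metric.ball_mem_nhds (0 : ℂ) (inv_pos.2 hr)] with w hw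
      rw [hEH hw]
      exact hHs w (mem_ball_zero_iff.1 hw)
  obtain ⟨M, hM0, hM⟩ := exists_bound_closedBall hEd.continuous R
  exact ⟨M, hM0.le, fun j => ham ▸ hab R hR (by linarith) M hM j⟩

/-- The continuation to `ℂ \ {0}` of the Cauchy transform of an analytic functional with
moments `m i q` against `X ^ i * z ^ q`, when these vanish for `k * q ≤ i`; the factor
`(sh^[q + 1] X) T` is the coefficient of `z ^ q` in `(X T - X z) / (T - z)`. -/
def cauchyCont (X : ℂ → ℂ) (k : ℕ) (m : ℕ → ℕ → ℂ) (T : ℂ) : ℂ :=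
  ∑' q, (∑ i ∈ Finset.range (k * q), m i q * ((X T)⁻¹) ^ (i + 1)) * (sh^[q + 1] X) T

lemma cauchyCont_diff {X : ℂ → ℂ} (hX : Differentiable ℂ X) (hXne : ∀ T, T ≠ 0 → X T ≠ 0)
    (k : ℕ) {m : ℕ → ℕ → ℂ} {L a r : ℝ} (ha : 0 ≤ a) (hr : 0 ≤ r)
    (hm : ∀ i q, ‖m i q‖ ≤ L * a ^ i * r ^ q) :
    DifferentiableOn ℂ (cauchyCont X k m) {0}ᶜ := by
  intro T₀ hT₀
  have hL : 0 ≤ L := by simpa using (norm_nonneg _).trans (hm 0 0)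
  have hX0 : 0 < ‖X T₀‖ := norm_pos_iff.2 (hXne T₀ hT₀)
  set l := ‖X T₀‖ / 2 with hl
  have hl0 : 0 < l := by positivity
  set U : Set ℂ := {T | ‖T‖ < ‖T₀‖ + 1 ∧ l < ‖X T‖} with hU
  have hUo : IsOpen U := (isOpen_lt continuous_norm continuous_const).inter
    (isOpen_lt continuous_const hX.continuous.norm)
  have hTU : T₀ ∈ U := ⟨by linarith, by rw [hl]; linarith⟩
  set Y := max 1 (a / l) with hY
  have hY1 : 1 ≤ Y := le_max_left _ _
  have hY2 : a / l ≤ Y := le_max_right _ _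
  set θ := r * Y ^ k with hθ
  have hθ0 : 0 ≤ θ := by positivity
  set R := ‖T₀‖ + 1 + 4 * θ with hR
  have hR0 : 0 < R := by positivity
  obtain ⟨M, hM0, hM⟩ := exists_bound_closedBall hX.continuous R
  have key : DifferentiableOn ℂ (cauchyCont X k m) U := by
    refine Complex.differentiableOn_tsum_of_summable_norm
      (u := fun q => (L / l * (2 / R) * M * k) * ((q : ℝ) * (1 / 2) ^ q)) ?_ ?_ hUo ?_
    · refine Summable.mul_left _ ?_
      simpa using summable_pow_mul_geometric_of_norm_lt_one (R := ℝ) 1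
        (r := 1 / 2) (by norm_num)
    · intro q
      refine DifferentiableOn.mul ?_ (sh_iter_diff hX (q + 1)).differentiableOn
      refine DifferentiableOn.fun_sum fun i _ => ?_
      refine DifferentiableOn.const_mul (DifferentiableOn.pow ?_ _) _
      refine hX.differentiableOn.inv (fun T hT => ?_)
      exact norm_pos_iff.1 (hl0.trans hT.2)
    · rintro q T ⟨hT1, hT2⟩
      have h1 := sh_iter_bound hX hR0 hM (q + 1) T (by rw [hR]; linarith)
      have h2 : ‖∑ i ∈ Finset.range (k * q), m i q * ((X T)⁻¹) ^ (i + 1)‖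
          ≤ ((k * q : ℕ) : ℝ) * (L / l * θ ^ q) := by
        refine (norm_sum_le _ _).trans ?_
        have : ∀ i ∈ Finset.range (k * q), ‖m i q * ((X T)⁻¹) ^ (i + 1)‖ ≤ L / l * θ ^ q := by
          intro i hi
          have hi' : i ≤ k * q := (Finset.mem_range.1 hi).le
          have hinv : ‖(X T)⁻¹‖ ≤ l⁻¹ := by
            rw [norm_inv]; exact inv_anti₀ hl0 hT2.le
          rw [norm_mul, norm_pow]
          calc ‖m i q‖ * ‖(X T)⁻¹‖ ^ (i + 1) ≤ (L * a ^ i * r ^ q) * l⁻¹ ^ (i + 1) := by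
                gcongr; exact hm i q
            _ = L / l * (r ^ q * (a / l) ^ i) := by rw [div_pow, pow_succ, inv_pow]; field_simp
            _ ≤ L / l * (r ^ q * Y ^ i) := by gcongr
            _ ≤ L / l * (r ^ q * Y ^ (k * q)) := by gcongr
            _ = L / l * θ ^ q := by rw [hθ, mul_pow, pow_mul]
        refine (Finset.sum_le_sum this).trans ?_
        simp
      have h3 : θ * (2 / R) ≤ 1 / 2 := by
        rw [mul_div_assoc', div_le_iff₀ hR0]; linarith [norm_nonneg T₀]
      rw [norm_mul]
      calc _ ≤ (((k * q : ℕ) : ℝ) * (L / l * θ ^ q)) * ((2 / R) ^ (q + 1) * M) := by gcongr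
        _ = (L / l * (2 / R) * M * k) * ((q : ℝ) * (θ * (2 / R)) ^ q) := by
            rw [mul_pow]; push_cast; ring
        _ ≤ _ := by gcongr
  exact (key.differentiableAt (hUo.mem_nhds hTU)).differentiableWithinAt

/-- The coordinate function on the closed disk of radius `r`. -/
def zc (r : ℝ) : C(Metric.closedBall (0 : ℂ) r, ℂ) := ⟨fun z => (z : ℂ), by fun_prop⟩

/-- The restriction of a continuous function to the closed disk of radius `r`. -/
def xc (r : ℝ) (X : ℂ → ℂ) (hX : Continuous X) : C(Metric.closedBall (0 : ℂ) r, ℂ) :=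
  ⟨fun z => X z, by fun_prop⟩

lemma hasSum_of_pointwise {K : Type*} [TopologicalSpace K] [CompactSpace K]
    {u : ℕ → C(K, ℂ)} (hu : Summable (fun n => ‖u n‖)) {g : C(K, ℂ)}
    (hg : ∀ x, HasSum (fun n => u n x) (g x)) : HasSum u g := by
  have h := (Summable.of_norm hu).hasSum
  have e : ∑' n, u n = g := by
    ext x
    exact (ContinuousMap.hasSum_apply h x).unique (hg x)
  rwa [e] at h

lemma zc_norm_pow {r : ℝ} (hr : 0 ≤ r) (q : ℕ) : ‖zc r ^ q‖ ≤ r ^ q := by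
  rw [ContinuousMap.norm_le _ (by positivity)]
  intro x
  simp only [ContinuousMap.pow_apply, norm_pow]
  have : ‖zc r x‖ ≤ r := mem_closedBall_zero_iff.1 x.2
  gcongr

lemma xc_norm_pow {r : ℝ} {X : ℂ → ℂ} (hX : Continuous X) (q : ℕ) :
    ‖xc r X hX ^ q‖ ≤ ‖xc r X hX‖ ^ q := by
  rw [ContinuousMap.norm_le _ (by positivity)]
  intro x
  simp only [ContinuousMap.pow_apply, norm_pow]
  have := (xc r X hX).norm_coe_le_norm x
  gcongr

section functional

variable {r : ℝ} {X : ℂ → ℂ} {k : ℕ}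

/-- Where the geometric series in `X z / X T` and in `z / T` both converge, `cauchyCont` is the
Cauchy transform of `ℓ`. -/
lemma hasSum_cauchyCont (hr : 0 < r) (hX : Differentiable ℂ X)
    (ℓ : C(Metric.closedBall (0 : ℂ) r, ℂ) →L[ℂ] ℂ)
    (hℓ : ∀ i q, k * q ≤ i → ℓ (xc r X hX.continuous ^ i * zc r ^ q) = 0)
    (T : ℂ) (hT : r < ‖T‖) (hXT : ‖xc r X hX.continuous‖ < ‖X T‖) :
    HasSum (fun j => ℓ (zc r ^ j) * (T⁻¹) ^ (j + 1))
      (cauchyCont X k (fun i q => ℓ (xc r X hX.continuous ^ i * zc r ^ q)) T) := by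
  set x := xc r X hX.continuous with hx
  have hT0 : 0 < ‖T‖ := hr.trans hT
  have hX0 : 0 < ‖X T‖ := (norm_nonneg _).trans_lt hXT
  have hgeo : ∀ (c d : ℂ), ‖d‖ < ‖c‖ → HasSum (fun i : ℕ => (c⁻¹) ^ (i + 1) * d ^ i) (c - d)⁻¹ := by
    intro c d h
    have hc : c ≠ 0 := norm_pos_iff.1 ((norm_nonneg d).trans_lt h)
    have hcd : c - d ≠ 0 := by
      intro h0
      rw [sub_eq_zero.1 h0] at h
      exact lt_irrefl _ h
    have h1 : ‖d / c‖ < 1 := by rw [norm_div]; exact (div_lt_one (norm_pos_iff.2 hc)).2 h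
    have h2 := (hasSum_geometric_of_norm_lt_one h1).mul_left c⁻¹
    have e1 : (fun i : ℕ => c⁻¹ * (d / c) ^ i) = fun i => (c⁻¹) ^ (i + 1) * d ^ i := by
      funext i
      rw [pow_succ, div_eq_mul_inv, mul_pow]; ring
    have e2 : c⁻¹ * (1 - d / c)⁻¹ = (c - d)⁻¹ := by
      rw [← mul_inv]; congr 1; field_simp
    rwa [e1, e2] at h2
  have hgsum : ∀ (c : ℂ) (s : ℝ), 0 ≤ s → s < ‖c‖ →
      Summable (fun i : ℕ => ‖(c⁻¹) ^ (i + 1)‖ * s ^ i) := by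
    intro c s hs h
    have hc : 0 < ‖c‖ := hs.trans_lt h
    have h2 := (summable_geometric_of_lt_one (div_nonneg hs hc.le)
      ((div_lt_one hc).2 h)).mul_left ‖c‖⁻¹
    refine h2.congr (fun i => ?_)
    rw [norm_pow, norm_inv, pow_succ, div_eq_mul_inv, mul_pow]; ring
  -- The geometric series for `1 / (X T - X z)`.
  set u₁ : ℕ → C(Metric.closedBall (0 : ℂ) r, ℂ) := fun i => ((X T)⁻¹) ^ (i + 1) • x ^ i with hu₁
  have hs₁ : Summable (fun i => ‖u₁ i‖) := by
    refine Summable.of_nonneg_of_le (fun i => norm_nonneg _) (fun i => ?_)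
      (hgsum (X T) ‖x‖ (norm_nonneg _) hXT)
    rw [hu₁, norm_smul]
    gcongr
    exact xc_norm_pow _ _
  -- The expansion of the divided difference `(X T - X z) / (T - z)`.
  set u₂ : ℕ → C(Metric.closedBall (0 : ℂ) r, ℂ) := fun q => (sh^[q + 1] X) T • zc r ^ q with hu₂
  have hs₂ : Summable (fun i => ‖u₂ i‖) := by
    refine Summable.of_nonneg_of_le (fun i => norm_nonneg _) (fun i => ?_)
      ((sh_hasSum hX T 0 (norm_pos_iff.1 hT0)).2 r (by simpa using hr.le))
    rw [hu₂, norm_smul]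
    gcongr
    exact zc_norm_pow hr.le _
  -- The geometric series for `1 / (T - z)`.
  set u₃ : ℕ → C(Metric.closedBall (0 : ℂ) r, ℂ) := fun j => (T⁻¹) ^ (j + 1) • zc r ^ j with hu₃
  have hs₃ : Summable (fun i => ‖u₃ i‖) := by
    refine Summable.of_nonneg_of_le (fun i => norm_nonneg _) (fun i => ?_)
      (hgsum T r hr.le hT)
    rw [hu₃, norm_smul]
    gcongr
    exact zc_norm_pow hr.le _
  have H₁ := (Summable.of_norm hs₁).hasSum
  have H₂ := (Summable.of_norm hs₂).hasSum
  have hprod : HasSum u₃ ((∑' i, u₁ i) * ∑' i, u₂ i) := by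
    refine hasSum_of_pointwise hs₃ (fun w => ?_)
    have hw : ‖(w : ℂ)‖ ≤ r := mem_closedBall_zero_iff.1 w.2
    have hxw : ‖X w‖ ≤ ‖x‖ := x.norm_coe_le_norm w
    have hTw : T ≠ w := by
      rintro h
      rw [h] at hT
      linarith
    have h1 : (∑' i, u₁ i) w = (X T - X w)⁻¹ := by
      refine (ContinuousMap.hasSum_apply H₁ w).unique ?_
      simpa [hu₁, hx, xc] using hgeo (X T) (X w) (hxw.trans_lt hXT)
    have h2 : (∑' i, u₂ i) w = (X T - X w) / (T - w) := by
      refine (ContinuousMap.hasSum_apply H₂ w).unique ?_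
      simpa [hu₂, zc] using (sh_hasSum hX T w hTw).1
    have hne : X T - X w ≠ 0 := by
      intro h0
      rw [sub_eq_zero.1 h0] at hXT
      linarith
    have e : ((∑' i, u₁ i) * ∑' i, u₂ i) w = (T - w)⁻¹ := by
      rw [ContinuousMap.mul_apply, h1, h2]
      field_simp
    rw [e]
    simpa [hu₃, zc] using hgeo T w (hw.trans_lt hT)
  have hleft := hprod.mapL ℓ
  have e3 : (fun j => ℓ (u₃ j)) = fun j => ℓ (zc r ^ j) * (T⁻¹) ^ (j + 1) := by
    funext j
    simp only [hu₃, map_smul, smul_eq_mul]; ring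
  rw [e3] at hleft
  convert hleft using 1
  have hright := (H₂.mul_left (∑' i, u₁ i)).mapL ℓ
  refine Eq.trans ?_ hright.tsum_eq
  rw [cauchyCont]
  refine tsum_congr (fun q => ?_)
  have hq := (H₁.mul_right (zc r ^ q)).mapL ℓ
  have hq2 : HasSum (fun i => ℓ (u₁ i * zc r ^ q))
      (∑ i ∈ Finset.range (k * q), ℓ (u₁ i * zc r ^ q)) := by
    refine hasSum_sum_of_ne_finset_zero (fun i hi => ?_)
    rw [Finset.mem_range, not_lt] at hi
    simp only [hu₁, smul_mul_assoc, map_smul, hℓ i q hi, smul_zero]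
  have hq3 := hq.unique hq2
  simp only [hu₂, mul_smul_comm, map_smul, smul_eq_mul]
  rw [hq3, mul_comm]
  congr 1
  refine Finset.sum_congr rfl (fun i _ => ?_)
  simp only [hu₁, smul_mul_assoc, map_smul, smul_eq_mul]
  ring

/-- A functional on `C(closedBall 0 r)` which annihilates `X ^ i * z ^ q` whenever `k * q ≤ i`
is, on holomorphic functions, continuous for uniform convergence on every small disk. -/
lemma functional_bound (hr : 0 < r) (hr1 : r < 1) (hX : Differentiable ℂ X) (hX0 : X 0 = 0)
    (hXne : ∀ T, T ≠ 0 → X T ≠ 0)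
    (ℓ : C(Metric.closedBall (0 : ℂ) r, ℂ) →L[ℂ] ℂ)
    (hℓ : ∀ i q, k * q ≤ i → ℓ (xc r X hX.continuous ^ i * zc r ^ q) = 0)
    (ρ : ℝ) (hρ : 0 < ρ) (hρ1 : ρ < 1) :
    ∃ C, ∀ G : ℂ → ℂ, DifferentiableOn ℂ G (Metric.ball 0 1) →
      ∀ M, (∀ z : ℂ, ‖z‖ ≤ ρ → ‖G z‖ ≤ M) →
      ∀ g : C(Metric.closedBall (0 : ℂ) r, ℂ), (∀ z, g z = G z) → ‖ℓ g‖ ≤ C * M := by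
  set x := xc r X hX.continuous with hx
  have hm : ∀ i q, ‖ℓ (x ^ i * zc r ^ q)‖ ≤ ‖ℓ‖ * ‖x‖ ^ i * r ^ q := by
    intro i q
    calc ‖ℓ (x ^ i * zc r ^ q)‖ ≤ ‖ℓ‖ * (‖x ^ i‖ * ‖zc r ^ q‖) :=
          (ℓ.le_opNorm _).trans (by gcongr; exact norm_mul_le _ _)
      _ ≤ ‖ℓ‖ * (‖x‖ ^ i * r ^ q) := by
          gcongr
          · exact xc_norm_pow _ _
          · exact zc_norm_pow hr.le _
      _ = _ := by ring
  have hJ := cauchyCont_diff hX hXne k (norm_nonneg x) hr.le hm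
  set W : Set ℂ := {T | r < ‖T‖ ∧ ‖x‖ < ‖X T‖} with hW
  have hWo : IsOpen W := (isOpen_lt continuous_const continuous_norm).inter
    (isOpen_lt continuous_const hX.continuous.norm)
  -- By Liouville's theorem `X` is not bounded by its supremum on the disk.
  have hWne : W.Nonempty := by
    by_contra hemp
    have hb : ∀ T, ‖X T‖ ≤ ‖x‖ := by
      intro T
      by_cases hT : ‖T‖ ≤ r
      · exact x.norm_coe_le_norm ⟨T, by simpa using hT⟩
      · by_contra hlt
        exact hemp ⟨T, not_le.1 hT, not_le.1 hlt⟩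
    have hbd : Bornology.IsBounded (Set.range X) := by
      rw [isBounded_iff_forall_norm_le]
      exact ⟨‖x‖, by rintro _ ⟨T, rfl⟩; exact hb T⟩
    exact hXne 1 one_ne_zero ((hX.apply_eq_apply_of_bounded hbd 1 0).trans hX0)
  obtain ⟨C, hC0, hC⟩ := moments_decay (m := fun j => ℓ (zc r ^ j)) (L := ‖ℓ‖) hr
    (fun j => by simpa using hm 0 j) hJ hWo (fun T hT => hT.1) hWne
    (fun T hT => hasSum_cauchyCont hr hX ℓ hℓ T hT.1 hT.2) (2 / ρ) (by positivity)
  refine ⟨2 * C, fun G hG M hM g hg => ?_⟩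
  have hM0 : 0 ≤ M := (norm_nonneg _).trans (hM 0 (by simpa using hρ.le))
  obtain ⟨a, ha, hab⟩ := exists_taylor hG
  have ha1 := hab ρ hρ hρ1 M hM
  have hsum : Summable (fun j => ‖a j • zc r ^ j‖) := by
    obtain ⟨s, hs1, hs2⟩ := exists_between hr1
    have hs0 : 0 < s := hr.trans hs1
    have hsm := (ha (s : ℂ) (by simpa [abs_of_pos hs0] using hs2)).summable.norm
    refine Summable.of_nonneg_of_le (fun i => norm_nonneg _) (fun i => ?_) hsm
    have hsn : ‖(s : ℂ)‖ = s := by rw [Complex.norm_real, Real.norm_eq_abs, abs_of_pos hs0]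
    rw [norm_smul, norm_mul (a i), norm_pow (s : ℂ), hsn]
    gcongr
    exact (zc_norm_pow hr.le i).trans (by gcongr)
  have hg2 : HasSum (fun j => a j • zc r ^ j) g := by
    refine hasSum_of_pointwise hsum (fun w => ?_)
    rw [hg w]
    have hw : ‖(w : ℂ)‖ ≤ r := mem_closedBall_zero_iff.1 w.2
    simpa [zc] using ha w (by simpa using hw.trans_lt hr1)
  have h := hg2.mapL ℓ
  have hgeo : HasSum (fun j : ℕ => C * M * (1 / 2 : ℝ) ^ j) (C * M * 2) := by
    have := (hasSum_geometric_of_lt_one (r := (1 / 2 : ℝ)) (by norm_num) (by norm_num)).mul_left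
      (C * M)
    norm_num at this ⊢
    exact this
  have := tsum_of_norm_bounded hgeo (f := fun j => ℓ (a j • zc r ^ j)) (fun j => ?_)
  · rw [h.tsum_eq] at this
    linarith
  · rw [map_smul, smul_eq_mul, norm_mul]
    calc ‖a j‖ * ‖ℓ (zc r ^ j)‖ ≤ (M / ρ ^ j) * (C / (2 / ρ) ^ j) := by
          gcongr
          · exact ha1 j
          · exact hC j
      _ = C * M * (1 / 2) ^ j := by rw [div_pow, div_pow, one_pow]; field_simp

end functional

/-! ### Expansion in powers of `X = z ^ 2 * exp g` -/

/-- The function `z ^ 2 * exp g`, whose only zero is a double zero at the origin. -/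
def Xf (g : ℂ → ℂ) : ℂ → ℂ := fun z => z ^ 2 * Complex.exp (g z)

/-- The operator `S` with `F = F 0 + F'(0) * z + X * S F` for `X = Xf g`. -/
def Sop (g F : ℂ → ℂ) : ℂ → ℂ := fun z => Complex.exp (-g z) * sh (sh F) z

/-- The coefficient of `X ^ n * z` in the expansion of `F` in powers of `X = Xf g`. -/
def bco (g : ℂ → ℂ) (n : ℕ) (F : ℂ → ℂ) : ℂ := sh ((Sop g)^[n] F) 0

lemma Xf_diff {g : ℂ → ℂ} (hg : Differentiable ℂ g) : Differentiable ℂ (Xf g) := by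
  unfold Xf; fun_prop

lemma Xf_zero (g : ℂ → ℂ) : Xf g 0 = 0 := by simp [Xf]

lemma Xf_ne (g : ℂ → ℂ) (z : ℂ) (hz : z ≠ 0) : Xf g z ≠ 0 :=
  mul_ne_zero (pow_ne_zero _ hz) (Complex.exp_ne_zero _)

lemma Sop_spec (g F : ℂ → ℂ) (z : ℂ) : F z = F 0 + sh F 0 * z + Xf g z * Sop g F z := by
  have h : Complex.exp (g z) * Complex.exp (-g z) = 1 := by
    rw [← Complex.exp_add]; simp
  have e : Xf g z * Sop g F z = z ^ 2 * sh (sh F) z := by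
    unfold Xf Sop
    linear_combination (z ^ 2 * sh (sh F) z) * h
  rw [e, sh_spec F z, sh_spec (sh F) z]
  ring

lemma Sop_expand (g F : ℂ → ℂ) (z : ℂ) (N : ℕ) :
    F z = ∑ n ∈ Finset.range N, Xf g z ^ n * (((Sop g)^[n] F) 0 + bco g n F * z)
      + Xf g z ^ N * ((Sop g)^[N] F) z := by
  induction N with
  | zero => simp
  | succ N ih =>
    rw [Finset.sum_range_succ, Function.iterate_succ_apply']
    have h := Sop_spec g ((Sop g)^[N] F) z
    unfold bco at ih ⊢
    linear_combination ih + Xf g z ^ N * h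

lemma Sop_diffOn {g F : ℂ → ℂ} (hg : Differentiable ℂ g)
    (hF : DifferentiableOn ℂ F (Metric.ball 0 1)) :
    DifferentiableOn ℂ (Sop g F) (Metric.ball 0 1) := by
  have h0 : Metric.ball (0 : ℂ) 1 ∈ 𝓝 (0 : ℂ) := Metric.ball_mem_nhds _ one_pos
  have h1 := sh_diffOn h0 (sh_diffOn h0 hF)
  have h2 : Differentiable ℂ fun z => Complex.exp (-g z) := by fun_prop
  exact h2.differentiableOn.mul h1

lemma Sop_iter_diffOn {g F : ℂ → ℂ} (hg : Differentiable ℂ g)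
    (hF : DifferentiableOn ℂ F (Metric.ball 0 1)) (n : ℕ) :
    DifferentiableOn ℂ ((Sop g)^[n] F) (Metric.ball 0 1) := by
  induction n with
  | zero => exact hF
  | succ n ih => rw [Function.iterate_succ_apply']; exact Sop_diffOn hg ih

lemma Sop_iter_bound {g : ℂ → ℂ} (hg : Differentiable ℂ g) {ρ : ℝ} (hρ : 0 < ρ) (hρ1 : ρ < 1) :
    ∃ C, 0 ≤ C ∧ ∀ F : ℂ → ℂ, DifferentiableOn ℂ F (Metric.ball 0 1) →
      ∀ M, (∀ z : ℂ, ‖z‖ ≤ ρ → ‖F z‖ ≤ M) →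
      ∀ n, ∀ z : ℂ, ‖z‖ ≤ ρ → ‖((Sop g)^[n] F) z‖ ≤ C ^ n * M := by
  have hc : Continuous fun z => Complex.exp (-g z) := by
    have := hg.continuous; fun_prop
  obtain ⟨E, hE0, hE⟩ := exists_bound_closedBall hc ρ
  have h0 : Metric.ball (0 : ℂ) 1 ∈ 𝓝 (0 : ℂ) := Metric.ball_mem_nhds _ one_pos
  have hsub : Metric.closedBall (0 : ℂ) ρ ⊆ Metric.ball 0 1 := Metric.closedBall_subset_ball hρ1
  refine ⟨E * (2 / ρ) * (2 / ρ), by positivity, fun F hF M hM n => ?_⟩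
  induction n with
  | zero => simpa using hM
  | succ n ih =>
    intro z hz
    have hd := Sop_iter_diffOn hg hF n
    have h1 := sh_bound Metric.isOpen_ball hρ hsub hd ih
    have h2 := sh_bound Metric.isOpen_ball hρ hsub (sh_diffOn h0 hd) h1 z hz
    rw [Function.iterate_succ_apply']
    calc ‖Sop g ((Sop g)^[n] F) z‖ = ‖Complex.exp (-g z)‖ * ‖sh (sh ((Sop g)^[n] F)) z‖ :=
          norm_mul _ _
      _ ≤ E * (2 / ρ * (2 / ρ * ((E * (2 / ρ) * (2 / ρ)) ^ n * M))) := by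
          gcongr; exact hE z hz
      _ = _ := by ring

lemma sh_sub {F G : ℂ → ℂ} (hF : DifferentiableAt ℂ F 0) (hG : DifferentiableAt ℂ G 0) :
    sh (F - G) = sh F - sh G := by
  funext z
  by_cases hz : z = 0
  · subst hz
    simp only [sh, dslope_same, Pi.sub_apply]
    exact deriv_sub hF hG
  · have h : z * sh (F - G) z = z * (sh F - sh G) z := by
      have h1 := sh_spec F z
      have h2 := sh_spec G z
      have h3 := sh_spec (F - G) z
      simp only [Pi.sub_apply] at h3 ⊢
      linear_combination -h3 + h1 - h2
    exact mul_left_cancel₀ hz h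

lemma Sop_iter_sub {g F G : ℂ → ℂ} (hg : Differentiable ℂ g)
    (hF : DifferentiableOn ℂ F (Metric.ball 0 1)) (hG : DifferentiableOn ℂ G (Metric.ball 0 1))
    (n : ℕ) : (Sop g)^[n] (F - G) = (Sop g)^[n] F - (Sop g)^[n] G := by
  have h0 : Metric.ball (0 : ℂ) 1 ∈ 𝓝 (0 : ℂ) := Metric.ball_mem_nhds _ one_pos
  induction n with
  | zero => rfl
  | succ n ih =>
    simp only [Function.iterate_succ_apply']
    have hF' := Sop_iter_diffOn hg hF n
    have hG' := Sop_iter_diffOn hg hG n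
    rw [ih]
    funext z
    simp only [Sop, Pi.sub_apply]
    rw [sh_sub (hF'.differentiableAt h0) (hG'.differentiableAt h0),
      sh_sub ((sh_diffOn h0 hF').differentiableAt h0) ((sh_diffOn h0 hG').differentiableAt h0),
      Pi.sub_apply, mul_sub]

/-- The coefficients `bco g n` are continuous for uniform convergence on a small disk. -/
lemma bco_cont {g : ℂ → ℂ} (hg : Differentiable ℂ g) (n : ℕ) :
    ∃ C, 0 ≤ C ∧ ∀ F G : ℂ → ℂ, DifferentiableOn ℂ F (Metric.ball 0 1) →
      DifferentiableOn ℂ G (Metric.ball 0 1) →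
      ∀ M, (∀ z : ℂ, ‖z‖ ≤ 1 / 2 → ‖F z - G z‖ ≤ M) → ‖bco g n F - bco g n G‖ ≤ C * M := by
  have h0 : Metric.ball (0 : ℂ) 1 ∈ 𝓝 (0 : ℂ) := Metric.ball_mem_nhds _ one_pos
  obtain ⟨C, hC0, hC⟩ := Sop_iter_bound hg (ρ := 1 / 2) (by norm_num) (by norm_num)
  refine ⟨2 / (1 / 2) * C ^ n, by positivity, fun F G hF hG M hM => ?_⟩
  have hFG : DifferentiableOn ℂ (F - G) (Metric.ball 0 1) := hF.sub hG
  have h1 := hC (F - G) hFG M hM n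
  have h2 := sh_bound Metric.isOpen_ball (by norm_num)
    (Metric.closedBall_subset_ball (by norm_num)) (Sop_iter_diffOn hg hFG n) h1 0 (by simp)
  rw [Sop_iter_sub hg hF hG, sh_sub ((Sop_iter_diffOn hg hF n).differentiableAt h0)
    ((Sop_iter_diffOn hg hG n).differentiableAt h0)] at h2
  unfold bco
  rw [mul_assoc]
  exact h2

/-! ### Density of the polynomials in `X` and `X ^ k * z` -/

/-- The argument is by duality: a functional annihilating all polynomials in `X` and `X ^ k * z`
kills the partial sums of the expansion of `F`, and these converge to `F` near `0`, which suffices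
by `functional_bound`. -/
lemma density {g : ℂ → ℂ} (hg : Differentiable ℂ g) (k : ℕ) {F : ℂ → ℂ}
    (hF : DifferentiableOn ℂ F (Metric.ball 0 1)) (hb : ∀ n < k, bco g n F = 0)
    {r : ℝ} (hr : 0 < r) (hr1 : r < 1) (ε : ℝ) (hε : 0 < ε) :
    ∃ P : MvPolynomial (Fin 2) ℂ, ∀ z : ℂ, ‖z‖ ≤ r →
      ‖F z - MvPolynomial.eval ![Xf g z, Xf g z ^ k * z] P‖ < ε := by
  have hX := Xf_diff hg
  set x := xc r (Xf g) hX.continuous with hx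
  set Φ : MvPolynomial (Fin 2) ℂ →ₐ[ℂ] C(Metric.closedBall (0 : ℂ) r, ℂ) :=
    MvPolynomial.aeval ![x, x ^ k * zc r] with hΦ
  have hΦe : ∀ P, ∀ z : Metric.closedBall (0 : ℂ) r,
      Φ P z = MvPolynomial.eval ![Xf g z, Xf g z ^ k * z] P := by
    intro P z
    induction P using MvPolynomial.induction_on with
    | C a => simp [hΦ]
    | add p q hp hq => rw [map_add, map_add, ContinuousMap.add_apply, hp, hq]
    | mul_X p i hp =>
      rw [map_mul, map_mul, ContinuousMap.mul_apply, hp]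
      congr 1
      fin_cases i <;> simp [hΦ, hx, xc, zc]
  set f : C(Metric.closedBall (0 : ℂ) r, ℂ) := ⟨fun z => F z,
    (hF.continuousOn.mono (Metric.closedBall_subset_ball hr1)).domRestrict⟩ with hf
  set S : Submodule ℂ C(Metric.closedBall (0 : ℂ) r, ℂ) :=
    (LinearMap.range Φ.toLinearMap).topologicalClosure with hS
  have hmem : ∀ P, Φ P ∈ S := fun P => Submodule.le_topologicalClosure _ ⟨P, rfl⟩
  suffices hfS : f ∈ S by
    have h1 : f ∈ closure (LinearMap.range Φ.toLinearMap : Set _) := hfS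
    obtain ⟨_, ⟨P, rfl⟩, hP⟩ := Metric.mem_closure_iff.1 h1 ε hε
    refine ⟨P, fun z hz => ?_⟩
    have h2 := (f - Φ P).norm_coe_le_norm ⟨z, mem_closedBall_zero_iff.2 hz⟩
    rw [ContinuousMap.sub_apply, hΦe] at h2
    exact h2.trans_lt (by simpa [dist_eq_norm] using hP)
  by_contra hfS
  obtain ⟨ℓ, u, hlt, hu⟩ := RCLike.geometric_hahn_banach_closed_point (𝕜 := ℂ)
    (s := (S : Set C(Metric.closedBall (0 : ℂ) r, ℂ)))
    ((S.restrictScalars ℝ).convex) (Submodule.isClosed_topologicalClosure _) hfS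
  have hu0 : 0 < u := by simpa using hlt 0 S.zero_mem
  have hℓS : ∀ a ∈ S, ℓ a = 0 := by
    intro a ha
    by_contra hne
    have := hlt (((u : ℂ) / ℓ a) • a) (S.smul_mem _ ha)
    rw [map_smul, smul_eq_mul, div_mul_cancel₀ _ hne] at this
    simp at this
  have hℓ : ∀ i q, k * q ≤ i → ℓ (x ^ i * zc r ^ q) = 0 := by
    intro i q hiq
    have e : x ^ i * zc r ^ q
        = Φ (MvPolynomial.X 0 ^ (i - k * q) * MvPolynomial.X 1 ^ q) := by
      simp only [hΦ, map_mul, map_pow, MvPolynomial.aeval_X, Matrix.cons_val_zero,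
        Matrix.cons_val_one]
      rw [mul_pow, ← mul_assoc, ← pow_mul, ← pow_add, Nat.sub_add_cancel hiq]
    rw [e]
    exact hℓS _ (hmem _)
  obtain ⟨C, hC0, hC⟩ := Sop_iter_bound hg (ρ := 1 / 2) (by norm_num) (by norm_num)
  obtain ⟨E, hE0, hE⟩ := exists_bound_closedBall
    (f := fun z => Complex.exp (g z)) (by have := hg.continuous; fun_prop) (1 / 2)
  -- On the disk of radius `σ` the product of the bounds for `X` and for `Sop g` is at most `1/2`.
  set σ : ℝ := 1 / (2 + 2 * (E * C)) with hσ
  have hEC : 0 ≤ E * C := by positivity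
  have hσ0 : 0 < σ := by positivity
  have hσ2 : σ * (2 + 2 * (E * C)) = 1 := by rw [hσ]; field_simp
  have hσh : σ ≤ 1 / 2 := by nlinarith
  have hσC : σ ^ 2 * E * C ≤ 1 / 2 := by nlinarith
  obtain ⟨D, hD⟩ := functional_bound hr hr1 hX (Xf_zero g) (Xf_ne g) ℓ hℓ σ hσ0 (by linarith)
  obtain ⟨M, hM⟩ := (isCompact_closedBall (0 : ℂ) (1 / 2)).exists_bound_of_continuousOn
    (hF.continuousOn.mono (Metric.closedBall_subset_ball (by norm_num)))
  have hM' : ∀ z : ℂ, ‖z‖ ≤ 1 / 2 → ‖F z‖ ≤ M := fun z hz => hM z (by simpa using hz)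
  have hM0 : 0 ≤ M := (norm_nonneg _).trans (hM' 0 (by simp))
  have main : ∀ N : ℕ, ‖ℓ f‖ ≤ D * ((1 / 2) ^ N * M) := by
    intro N
    set p : C(Metric.closedBall (0 : ℂ) r, ℂ) := ∑ n ∈ Finset.range N,
      ((((Sop g)^[n] F) 0) • (x ^ n * zc r ^ 0) + bco g n F • (x ^ n * zc r ^ 1)) with hp
    have hp0 : ℓ p = 0 := by
      rw [hp, map_sum]
      refine Finset.sum_eq_zero (fun n _ => ?_)
      rw [map_add, map_smul, map_smul, hℓ n 0 (by simp), smul_zero, zero_add]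
      by_cases hn : n < k
      · rw [hb n hn, zero_smul]
      · rw [hℓ n 1 (by omega), smul_zero]
    have hfp : ℓ f = ℓ (f - p) := by rw [map_sub, hp0, sub_zero]
    rw [hfp]
    refine hD (fun z => Xf g z ^ N * ((Sop g)^[N] F) z)
      ((hX.pow N).differentiableOn.mul (Sop_iter_diffOn hg hF N)) _ (fun z hz => ?_) _
      (fun z => ?_)
    · have hz2 := hz.trans hσh
      have h1 : ‖Xf g z‖ ≤ σ ^ 2 * E := by
        rw [Xf, norm_mul, norm_pow]
        have := hE z hz2
        gcongr
      rw [norm_mul, norm_pow]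
      calc ‖Xf g z‖ ^ N * ‖((Sop g)^[N] F) z‖ ≤ (σ ^ 2 * E) ^ N * (C ^ N * M) := by
            gcongr; exact hC F hF M hM' N z hz2
        _ = (σ ^ 2 * E * C) ^ N * M := by rw [mul_pow _ C]; ring
        _ ≤ _ := by gcongr
    · have h1 := Sop_expand g F z N
      have h2 : p z = ∑ n ∈ Finset.range N,
          Xf g z ^ n * (((Sop g)^[n] F) 0 + bco g n F * z) := by
        rw [hp, ContinuousMap.coe_sum, Finset.sum_apply]
        refine Finset.sum_congr rfl (fun n _ => ?_)
        simp [hx, xc, zc]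
        ring
      rw [ContinuousMap.sub_apply, h2]
      change F z - _ = _
      linear_combination h1
  have hlim : Tendsto (fun N : ℕ => D * ((1 / 2 : ℝ) ^ N * M)) atTop (𝓝 0) := by
    simpa using ((tendsto_pow_atTop_nhds_zero_of_lt_one (by norm_num : (0 : ℝ) ≤ 1 / 2)
        (by norm_num)).mul_const M).const_mul D
  have h0 : ‖ℓ f‖ ≤ 0 := ge_of_tendsto' hlim main
  rw [norm_le_zero_iff.1 h0] at hu
  simp at hu
  linarith

/-! ### Structure of a simple cusp algebra -/

/-- Restriction to the disk of a function on `ℂ`. -/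
def res (F : ℂ → ℂ) : 𝔻 → ℂ := fun z => F z

lemma isHolo_res {F : ℂ → ℂ} (hF : DifferentiableOn ℂ F 𝔻) : IsHolo (res F) :=
  ⟨F, hF, fun _ => rfl⟩

lemma disk_nhds : 𝔻 ∈ 𝓝 (0 : ℂ) := Metric.ball_mem_nhds _ one_pos

lemma res_congr {F G : ℂ → ℂ} (h : ∀ z ∈ 𝔻, F z = G z) : res F = res G := by
  funext z; exact h z z.2

lemma der_res {F : ℂ → ℂ} (hF : DifferentiableOn ℂ F 𝔻) (j : ℕ) :
    der j 0 (res F) = iteratedDeriv j F 0 := by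
  have h := isHolo_res hF
  rw [der, dif_pos h]
  refine Filter.EventuallyEq.iteratedDeriv_eq j ?_
  filter_upwards [disk_nhds] with z hz
  exact (h.choose_spec.2 ⟨z, hz⟩).symm

/-- `z ^ n O(𝔻) ⊆ A`, in terms of functions on `ℂ`. -/
def ContainsPow (A : Subalgebra ℂ (𝔻 → ℂ)) (n : ℕ) : Prop :=
  ∀ G : ℂ → ℂ, DifferentiableOn ℂ G 𝔻 → res (fun z => z ^ n * G z) ∈ A

/-- `A` has an element vanishing at `0` to order exactly `n`. -/
def HasOrder (A : Subalgebra ℂ (𝔻 → ℂ)) (n : ℕ) : Prop :=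
  ∃ G : ℂ → ℂ, DifferentiableOn ℂ G 𝔻 ∧ G 0 ≠ 0 ∧ res (fun z => z ^ n * G z) ∈ A

lemma ContainsPow.mono {A : Subalgebra ℂ (𝔻 → ℂ)} {m n : ℕ} (h : ContainsPow A m)
    (hmn : m ≤ n) : ContainsPow A n := by
  intro G hG
  have e : (fun z : ℂ => z ^ n * G z) = fun z => z ^ m * (z ^ (n - m) * G z) := by
    funext z
    rw [← mul_assoc, ← pow_add, Nat.add_sub_cancel' hmn]
  rw [e]
  exact h _ ((differentiable_id.pow _).differentiableOn.mul hG)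

lemma ContainsPow.pred {A : Subalgebra ℂ (𝔻 → ℂ)} {n : ℕ} (h : ContainsPow A (n + 1))
    (ho : HasOrder A n) : ContainsPow A n := by
  intro G hG
  obtain ⟨E, hE, hE0, hEA⟩ := ho
  set c := G 0 / E 0 with hc
  have hd : DifferentiableOn ℂ (fun z => G z - c * E z) 𝔻 := hG.sub (hE.const_mul c)
  have e : res (fun z => z ^ n * G z) = c • res (fun z => z ^ n * E z)
      + res (fun z => z ^ (n + 1) * sh (fun z => G z - c * E z) z) := by
    funext z
    have h1 := sh_spec (fun z => G z - c * E z) z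
    have h2 : c * E 0 = G 0 := by rw [hc]; field_simp
    simp only [res, Pi.add_apply, Pi.smul_apply, smul_eq_mul]
    simp only [h2, sub_self, zero_add] at h1
    linear_combination (z : ℂ) ^ n * h1
  rw [e]
  exact A.add_mem (A.smul_mem hEA c) (h _ (sh_diffOn disk_nhds hd))

lemma HasOrder.mul {A : Subalgebra ℂ (𝔻 → ℂ)} {m n : ℕ} (h₁ : HasOrder A m)
    (h₂ : HasOrder A n) : HasOrder A (m + n) := by
  obtain ⟨G, hG, hG0, hGA⟩ := h₁
  obtain ⟨E, hE, hE0, hEA⟩ := h₂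
  refine ⟨fun z => G z * E z, hG.mul hE, mul_ne_zero hG0 hE0, ?_⟩
  convert A.mul_mem hGA hEA using 1
  funext z
  simp only [res, Pi.mul_apply]
  ring

lemma HasOrder.zero (A : Subalgebra ℂ (𝔻 → ℂ)) : HasOrder A 0 :=
  ⟨fun _ => 1, differentiableOn_const 1, one_ne_zero, by
    convert A.one_mem using 1
    funext z
    simp [res]⟩

/-- Products of elements of orders `2` and `2 * k + 1` realise every order `≥ 2 * k`; removing
leading terms with them brings the exponent `m` down to `2 * k`. -/
lemma containsPow_of_orders {A : Subalgebra ℂ (𝔻 → ℂ)} {m k : ℕ} (hm : ContainsPow A m)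
    (h2 : HasOrder A 2) (hk : HasOrder A (2 * k + 1)) : ContainsPow A (2 * k) := by
  have heven : ∀ l, HasOrder A (2 * l) := by
    intro l
    induction l with
    | zero => exact HasOrder.zero A
    | succ l ih => exact ih.mul h2
  have hall : ∀ n, 2 * k ≤ n → HasOrder A n := by
    intro n hn
    rcases Nat.even_or_odd' n with ⟨l, rfl | rfl⟩
    · exact heven l
    · have := hk.mul (heven (l - k))
      rwa [show 2 * k + 1 + 2 * (l - k) = 2 * l + 1 by omega] at this
  have key : ∀ d n, 2 * k ≤ n → m ≤ n + d → ContainsPow A n := by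
    intro d
    induction d with
    | zero => exact fun n _ hn => hm.mono hn
    | succ d ih => exact fun n hn hd => (ih (n + 1) (by omega) (by omega)).pred (hall n hn)
  exact key m (2 * k) le_rfl (by omega)

/-- A nonvanishing germ agrees to any finite order with the exponential of an entire function. -/
lemma exists_exp_approx {u : ℂ → ℂ} (hu : DifferentiableOn ℂ u 𝔻) (hu0 : u 0 ≠ 0) (n : ℕ) :
    ∃ g : ℂ → ℂ, Differentiable ℂ g ∧ ∃ v : ℂ → ℂ, DifferentiableOn ℂ v 𝔻 ∧
      ∀ z, u z - Complex.exp (g z) = z ^ (n + 1) * v z := by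
  induction n with
  | zero =>
    refine ⟨fun _ => Complex.log (u 0), differentiable_const _, sh u, sh_diffOn disk_nhds hu,
      fun z => ?_⟩
    rw [Complex.exp_log hu0, sh_spec u z]
    ring
  | succ n ih =>
    obtain ⟨g, hg, v, hv, huv⟩ := ih
    set c := v 0 / Complex.exp (g 0) with hc
    set φ := sh Complex.exp with hφ
    have hφd : Differentiable ℂ φ := sh_diff Complex.differentiable_exp
    have hφ0 : φ 0 = 1 := by simp [hφ, sh]
    have hφs : ∀ w, Complex.exp w = 1 + w * φ w := fun w => by
      simpa using sh_spec Complex.exp w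
    set Q : ℂ → ℂ := fun z => v z - Complex.exp (g z) * c * φ (c * z ^ (n + 1)) with hQ
    have hQ0 : Q 0 = 0 := by
      have := Complex.exp_ne_zero (g 0)
      simp only [hQ, hc]
      simp only [ne_eq, Nat.add_eq_zero_iff, one_ne_zero, and_false, not_false_eq_true, zero_pow,
        mul_zero, hφ0]
      field_simp
      ring
    have hQd : DifferentiableOn ℂ Q 𝔻 := by
      have : Differentiable ℂ fun z => Complex.exp (g z) * c * φ (c * z ^ (n + 1)) := by fun_prop
      exact hv.sub this.differentiableOn
    refine ⟨fun z => g z + c * z ^ (n + 1), by fun_prop, sh Q, sh_diffOn disk_nhds hQd,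
      fun z => ?_⟩
    have h1 := sh_spec Q z
    rw [hQ0, zero_add] at h1
    have h2 := huv z
    rw [Complex.exp_add, hφs (c * z ^ (n + 1)), pow_succ z (n + 1), mul_assoc (z ^ (n + 1)), ← h1]
    simp only [hQ]
    linear_combination h2

/-- Contact one: every element of `A` is critical at `0`, and some element has order two. -/
lemma der_facts {A : Subalgebra ℂ (𝔻 → ℂ)} (hA : IsSimpleCuspAlgebra A) :
    (∀ F, DifferentiableOn ℂ F 𝔻 → res F ∈ A → deriv F 0 = 0) ∧ HasOrder A 2 := by
  obtain ⟨⟨hAH, -, -⟩, hcon⟩ := hA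
  set S := {n : ℕ | ∀ f ∈ A, ∀ j, 1 ≤ j → j ≤ n → der j 0 f = 0} with hS
  have hcon' : sSup S = 1 := hcon
  have hbdd : BddAbove S := by
    by_contra h
    rw [Nat.sSup_of_not_bddAbove h] at hcon'
    exact zero_ne_one hcon'
  have h1 : 1 ∈ S := by
    have := Nat.sSup_mem (s := S) ⟨0, fun f _ j h1 h2 => by omega⟩ hbdd
    rwa [hcon'] at this
  have h2 : 2 ∉ S := fun h => by
    have := le_csSup hbdd h
    omega
  have hd1 : ∀ F, DifferentiableOn ℂ F 𝔻 → res F ∈ A → deriv F 0 = 0 := by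
    intro F hF hFA
    have := h1 _ hFA 1 le_rfl le_rfl
    rwa [der_res hF, iteratedDeriv_one] at this
  refine ⟨hd1, ?_⟩
  obtain ⟨f, hf, hf2⟩ : ∃ f ∈ A, der 2 0 f ≠ 0 := by
    by_contra hno
    push Not at hno
    refine h2 (fun f hf j hj1 hj2 => ?_)
    obtain rfl | rfl : j = 1 ∨ j = 2 := by omega
    · exact h1 f hf 1 le_rfl le_rfl
    · exact hno f hf
  obtain ⟨F, hF, hfF⟩ := hAH hf
  obtain rfl : f = res F := funext hfF
  set u := sh (sh F) with hu
  have hud : DifferentiableOn ℂ u 𝔻 := sh_diffOn disk_nhds (sh_diffOn disk_nhds hF)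
  have hsh0 : sh F 0 = 0 := by
    rw [sh, dslope_same]; exact hd1 F hF hf
  have hFu : ∀ z, F z = F 0 + z ^ 2 * u z := by
    intro z
    have h3 := sh_spec F z
    have h4 := sh_spec (sh F) z
    rw [hsh0, zero_add] at h4
    rw [h4] at h3
    rw [h3]; ring
  refine ⟨u, hud, ?_, ?_⟩
  · intro hu0
    apply hf2
    rw [der_res hF, iteratedDeriv_succ, iteratedDeriv_one]
    have hopen : IsOpen 𝔻 := Metric.isOpen_ball
    have hud' : DifferentiableOn ℂ (deriv u) 𝔻 := hud.deriv hopen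
    have he : deriv F =ᶠ[𝓝 0] fun z => z * (2 * u z + z * deriv u z) := by
      filter_upwards [disk_nhds] with z hz
      have hz' := (hud.differentiableAt (hopen.mem_nhds hz)).hasDerivAt
      have h5 : HasDerivAt (fun z => F 0 + z ^ 2 * u z)
          ((2 * z ^ 1 * 1) * u z + z ^ 2 * deriv u z) z :=
        (((hasDerivAt_id z).pow 2).mul hz').const_add (F 0)
      rw [show F = fun z => F 0 + z ^ 2 * u z from funext hFu, h5.deriv]
      ring
    rw [he.deriv_eq]
    have hW : DifferentiableAt ℂ (fun z => 2 * u z + z * deriv u z) 0 := by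
      have h6 := hud.differentiableAt disk_nhds
      have h7 := hud'.differentiableAt disk_nhds
      fun_prop
    have h8 : HasDerivAt (fun z => z * (2 * u z + z * deriv u z))
        (1 * (2 * u 0 + 0 * deriv u 0) + 0 * deriv (fun z => 2 * u z + z * deriv u z) 0) 0 :=
      (hasDerivAt_id (0 : ℂ)).mul hW.hasDerivAt
    rw [h8.deriv, hu0]
    simp
  · have e : res (fun z => z ^ 2 * u z) = res F - algebraMap ℂ (𝔻 → ℂ) (F 0) := by
      funext z
      have := hFu z
      simp only [res, Pi.sub_apply, Pi.algebraMap_apply, Algebra.algebraMap_self, RingHom.id_apply]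
      linear_combination -this
    rw [e]
    exact A.sub_mem hf (A.algebraMap_mem _)

/-- If `2 * k + 1` is the least odd order of an element of `A`, then membership in `A` is
the vanishing of the first `k` coefficients `bco`. -/
lemma mem_iff_bco {A : Subalgebra ℂ (𝔻 → ℂ)} {k : ℕ} {g : ℂ → ℂ} (hg : Differentiable ℂ g)
    (hX : res (Xf g) ∈ A) (hk : ContainsPow A (2 * k))
    (hmin : ∀ n < k, ¬ HasOrder A (2 * n + 1)) {F : ℂ → ℂ} (hF : DifferentiableOn ℂ F 𝔻) :
    res F ∈ A ↔ ∀ n < k, bco g n F = 0 := by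
  have hexp : ∀ N, Differentiable ℂ fun z => Complex.exp (g z) ^ N := by
    intro N; fun_prop
  have hXpow : ∀ (z : ℂ) N, Xf g z ^ N = z ^ (2 * N) * Complex.exp (g z) ^ N := by
    intro z N; rw [Xf, mul_pow, ← pow_mul]
  have hsumA : ∀ N, (∑ n ∈ Finset.range N, (((Sop g)^[n] F) 0) • res (Xf g) ^ n) ∈ A :=
    fun N => A.sum_mem (fun n _ => A.smul_mem (A.pow_mem hX n) _)
  constructor
  · intro hFA n
    induction n using Nat.strong_induction_on with
    | _ n ih =>
      intro hn
      by_contra hne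
      refine hmin n hn ⟨fun z => Complex.exp (g z) ^ n * bco g n F
        + z * (Complex.exp (g z) ^ (n + 1) * ((Sop g)^[n + 1] F) z), ?_, ?_, ?_⟩
      · exact ((hexp n).differentiableOn.mul_const _).add (differentiableOn_id.mul
          ((hexp (n + 1)).differentiableOn.mul (Sop_iter_diffOn hg hF (n + 1))))
      · simpa using hne
      · have e : res (fun z => z ^ (2 * n + 1) * (Complex.exp (g z) ^ n * bco g n F
            + z * (Complex.exp (g z) ^ (n + 1) * ((Sop g)^[n + 1] F) z)))
            = res F - ∑ i ∈ Finset.range (n + 1), (((Sop g)^[i] F) 0) • res (Xf g) ^ i := by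
          funext z
          have h1 := Sop_expand g F z (n + 1)
          have h2 : ∀ i ∈ Finset.range n, Xf g z ^ i * (((Sop g)^[i] F) 0 + bco g i F * z)
              = ((Sop g)^[i] F) 0 * Xf g z ^ i := by
            intro i hi
            have hin := Finset.mem_range.1 hi
            rw [ih i hin (hin.trans hn)]
            ring
          rw [Finset.sum_range_succ, Finset.sum_congr rfl h2] at h1
          simp only [res, Pi.sub_apply, Finset.sum_apply, Pi.smul_apply, Pi.pow_apply, smul_eq_mul]
          rw [Finset.sum_range_succ]
          have h3 := hXpow z n
          have h4 := hXpow z (n + 1)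
          linear_combination -h1 - (bco g n F * z) * h3 - ((Sop g)^[n + 1] F) z * h4
        rw [e]
        exact A.sub_mem hFA (hsumA _)
  · intro hb
    have e : res F = (∑ i ∈ Finset.range k, (((Sop g)^[i] F) 0) • res (Xf g) ^ i)
        + res (fun z => z ^ (2 * k) * (Complex.exp (g z) ^ k * ((Sop g)^[k] F) z)) := by
      funext z
      have h1 := Sop_expand g F z k
      have h2 : ∀ i ∈ Finset.range k, Xf g z ^ i * (((Sop g)^[i] F) 0 + bco g i F * z)
          = ((Sop g)^[i] F) 0 * Xf g z ^ i := by
        intro i hi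
        rw [hb i (Finset.mem_range.1 hi)]
        ring
      rw [Finset.sum_congr rfl h2] at h1
      simp only [res, Pi.add_apply, Finset.sum_apply, Pi.smul_apply, Pi.pow_apply, smul_eq_mul]
      have h3 := hXpow z k
      linear_combination h1 + ((Sop g)^[k] F) z * h3
    rw [e]
    exact A.add_mem (hsumA _) (hk _ ((hexp k).differentiableOn.mul (Sop_iter_diffOn hg hF k)))

lemma eval_diff {f₁ f₂ : ℂ → ℂ} (h₁ : Differentiable ℂ f₁) (h₂ : Differentiable ℂ f₂)
    (P : MvPolynomial (Fin 2) ℂ) :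
    Differentiable ℂ fun z => MvPolynomial.eval ![f₁ z, f₂ z] P := by
  induction P using MvPolynomial.induction_on with
  | C a => simp
  | add p q hp hq => simp only [map_add]; exact hp.add hq
  | mul_X p i hp =>
    simp only [map_mul, MvPolynomial.eval_X]
    fin_cases i
    · exact hp.mul h₁
    · exact hp.mul h₂

lemma eval_mem {A : Subalgebra ℂ (𝔻 → ℂ)} {f₁ f₂ : ℂ → ℂ} (h₁ : res f₁ ∈ A) (h₂ : res f₂ ∈ A)
    (P : MvPolynomial (Fin 2) ℂ) :
    res (fun z => MvPolynomial.eval ![f₁ z, f₂ z] P) ∈ A := by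
  induction P using MvPolynomial.induction_on with
  | C a =>
    simp only [MvPolynomial.eval_C]
    exact A.algebraMap_mem a
  | add p q hp hq => simp only [map_add]; exact A.add_mem hp hq
  | mul_X p i hp =>
    simp only [map_mul, MvPolynomial.eval_X]
    fin_cases i
    · exact A.mul_mem hp h₁
    · exact A.mul_mem hp h₂

/-! ### Generators of a simple cusp algebra -/

/-- There are `h₁, h₂ ∈ A` with `(h₁, h₂)` injective on `𝔻 \ {0}` such that
`A` is the closure (uniform convergence on compact subsets of `𝔻`) of the
polynomials in `h₁` and `h₂`. -/
theorem stmt_18 (A : Subalgebra ℂ (𝔻 → ℂ)) (hA : IsSimpleCuspAlgebra A) :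
    ∃ h₁ ∈ A, ∃ h₂ ∈ A,
      Set.InjOn (fun z : 𝔻 => (h₁ z, h₂ z)) {z : 𝔻 | z ≠ d0} ∧
      ∀ f : 𝔻 → ℂ,
        (f ∈ A ↔
          ∀ K : Set ℂ, K ⊆ 𝔻 → IsCompact K → ∀ ε : ℝ, 0 < ε →
            ∃ P : MvPolynomial (Fin 2) ℂ, ∀ z : 𝔻, (z : ℂ) ∈ K →
              ‖f z - MvPolynomial.eval ![h₁ z, h₂ z] P‖ < ε) := by
  obtain ⟨hd1, ho2⟩ := der_facts hA
  obtain ⟨⟨hAH, -, m, -, hm⟩, -⟩ := hA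
  have hmA : ContainsPow A m := fun G hG => hm ⟨res G, isHolo_res hG, rfl⟩
  have hodd : ∃ n, HasOrder A (2 * n + 1) :=
    ⟨m, fun _ => 1, differentiableOn_const 1, one_ne_zero,
      hmA.mono (by omega) _ (differentiableOn_const 1)⟩
  set k := Nat.find hodd with hkdef
  have hmin : ∀ n < k, ¬ HasOrder A (2 * n + 1) := fun n hn => Nat.find_min hodd hn
  have hk : ContainsPow A (2 * k) := containsPow_of_orders hmA ho2 (Nat.find_spec hodd)
  -- Correct the element of order two by higher order terms to make it `z ^ 2 * exp g`.
  obtain ⟨u, hu, hu0, huA⟩ := ho2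
  obtain ⟨g, hg, v, hv, huv⟩ := exists_exp_approx hu hu0 (2 * k)
  have hXA : res (Xf g) ∈ A := by
    have e : res (Xf g) = res (fun z => z ^ 2 * u z)
        - res (fun z => z ^ (2 * k) * (z ^ 3 * v z)) := by
      funext z
      have := huv z
      simp only [res, Xf, Pi.sub_apply]
      linear_combination -(z : ℂ) ^ 2 * this
    rw [e]
    exact A.sub_mem huA (hk _ ((differentiable_id.pow 3).differentiableOn.mul hv))
  have hXd := Xf_diff hg
  have hYd : Differentiable ℂ fun z => Xf g z ^ k * z := (hXd.pow k).mul differentiable_id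
  have hYA : res (fun z => Xf g z ^ k * z) ∈ A := by
    have e : (fun z => Xf g z ^ k * z) = fun z => z ^ (2 * k) * (Complex.exp (g z) ^ k * z) := by
      funext z
      rw [Xf, mul_pow, ← pow_mul]; ring
    rw [e]
    exact hk _ (by fun_prop)
  have hcrit : ∀ {F : ℂ → ℂ}, DifferentiableOn ℂ F 𝔻 → (res F ∈ A ↔ ∀ n < k, bco g n F = 0) :=
    fun hF => mem_iff_bco hg hXA hk hmin hF
  refine ⟨res (Xf g), hXA, _, hYA, ?_, fun f => ⟨fun hf K hK hKc ε hε => ?_, fun hf => ?_⟩⟩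
  · intro z hz w hw hzw
    have hz0 : (z : ℂ) ≠ 0 := fun h => hz (Subtype.ext h)
    simp only [res, Prod.mk.injEq] at hzw
    have h2 := hzw.2
    rw [← hzw.1] at h2
    exact Subtype.ext (mul_left_cancel₀ (pow_ne_zero k (Xf_ne g z hz0)) h2)
  · obtain ⟨F, hF, hfF⟩ := hAH hf
    obtain rfl : f = res F := funext hfF
    obtain ⟨r, hr, hr1, hKr⟩ : ∃ r, 0 < r ∧ r < 1 ∧ ∀ z ∈ K, ‖z‖ ≤ r := by
      obtain ⟨r, ⟨hr0, hr1⟩, hKr⟩ := exists_pos_lt_subset_ball one_pos hKc.isClosed hK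
      exact ⟨r, hr0, hr1, fun z hz => (mem_ball_zero_iff.1 (hKr hz)).le⟩
    obtain ⟨P, hP⟩ := density hg k hF ((hcrit hF).1 hf) hr hr1 ε hε
    exact ⟨P, fun z hz => hP z (hKr z hz)⟩
  · set Φ : MvPolynomial (Fin 2) ℂ → ℂ → ℂ :=
      fun P z => MvPolynomial.eval ![Xf g z, Xf g z ^ k * z] P with hΦ
    have hΦd : ∀ P, Differentiable ℂ (Φ P) := fun P => eval_diff hXd hYd P
    have hΦA : ∀ P, res (Φ P) ∈ A := fun P => eval_mem hXA hYA P
    obtain ⟨F, rfl⟩ : ∃ F : ℂ → ℂ, f = res F :=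
      ⟨fun z => if h : z ∈ 𝔻 then f ⟨z, h⟩ else 0, funext fun z => by simp [res]⟩
    have happ : ∀ r, r < 1 → ∀ ε, 0 < ε → ∃ P, ∀ z : ℂ, ‖z‖ ≤ r → ‖F z - Φ P z‖ < ε := by
      intro r hr ε hε
      have hsub : Metric.closedBall (0 : ℂ) r ⊆ 𝔻 := Metric.closedBall_subset_ball hr
      obtain ⟨P, hP⟩ := hf _ hsub (isCompact_closedBall _ _) ε hε
      exact ⟨P, fun z hz => hP ⟨z, hsub (mem_closedBall_zero_iff.2 hz)⟩
        (mem_closedBall_zero_iff.2 hz)⟩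
    have hFd : DifferentiableOn ℂ F 𝔻 := by
      intro z hz
      obtain ⟨r, hzr, hr1⟩ := exists_between (mem_ball_zero_iff.1 hz)
      have hpos : ∀ n : ℕ, (0 : ℝ) < 1 / ((n : ℝ) + 1) := fun n => Nat.one_div_pos_of_nat
      choose P hP using fun n : ℕ => happ r hr1 _ (hpos n)
      have hunif : TendstoUniformlyOn (fun n => Φ (P n)) F atTop (Metric.ball 0 r) := by
        rw [Metric.tendstoUniformlyOn_iff]
        intro ε hε
        filter_upwards [(tendsto_order.1 tendsto_one_div_add_atTop_nhds_zero_nat).2 ε hε]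
          with n hn w hw
        rw [dist_eq_norm]
        exact (hP n w (mem_ball_zero_iff.1 hw).le).trans hn
      have := hunif.tendstoLocallyUniformlyOn.differentiableOn
        (Eventually.of_forall fun n => (hΦd (P n)).differentiableOn) Metric.isOpen_ball
      exact (this.differentiableAt (Metric.isOpen_ball.mem_nhds
        (mem_ball_zero_iff.2 hzr))).differentiableWithinAt
    refine (hcrit hFd).2 (fun n hn => ?_)
    obtain ⟨C, hC0, hC⟩ := bco_cont hg n
    rw [← norm_le_zero_iff]
    refine le_of_forall_pos_le_add (fun ε hε => ?_)
    obtain ⟨P, hP⟩ := happ (1 / 2) (by norm_num) (ε / (C + 1)) (by positivity)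
    have h1 := hC F (Φ P) hFd (hΦd P).differentiableOn _ (fun z hz => (hP z hz).le)
    rw [(hcrit (hΦd P).differentiableOn).1 (hΦA P) n hn, sub_zero] at h1
    refine h1.trans ?_
    rw [zero_add, mul_div_assoc', div_le_iff₀ (by positivity)]
    nlinarith

end
end
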